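/- Let b ∈ [0,1) and τ > 0. The neutral KPP-Fisher equation ∂_t(u(t,x) − b·u(t−τ,x)) = ∂_xx(u(t,x) − b·u(t−τ,x)) + u(t,x)·(1 − u(t−τ,x)) admits a monotone traveling front u(t,x) = φ(x+ct) with speed c > 0 if and only if the characteristic function χ₀ has a positive real zero and the characteristic function χ₁ has a negative real zero (i.e., if and only if (τ,c) ∈ 𝔇). -/

import Mathlib

open Filter

/-- Characteristic function χ₀(z) = z² − c·z + 1/(1 − b·e^{−z·c·τ}). -/
noncomputable def chi0 (b c τ z : ℝ) : ℝ :=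
  z ^ 2 - c * z + 1 / (1 - b * Real.exp (-(z * c * τ)))

/-- Characteristic function χ₁(z) = z² − c·z − e^{−z·c·τ}/(1 − b·e^{−z·c·τ}). -/
noncomputable def chi1 (b c τ z : ℝ) : ℝ :=
  z ^ 2 - c * z - Real.exp (-(z * c * τ)) / (1 - b * Real.exp (-(z * c * τ)))

/-- The domain 𝔇: χ₀ has a positive real zero and χ₁ has a negative real zero. -/
def inD (b τ c : ℝ) : Prop :=
  (∃ z > (0 : ℝ), chi0 b c τ z = 0) ∧ (∃ z < (0 : ℝ), chi1 b c τ z = 0)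

/-- A monotone traveling front of the neutral KPP-Fisher equation with speed `c`:
`φ` is nondecreasing, `v(t) = φ(t) − b·φ(t − c·τ)` is twice continuously differentiable,
`v'' − c·v' + φ(t)(1 − φ(t − c·τ)) = 0`, and `φ(−∞) = 0`, `φ(+∞) = 1`. -/
def IsMonotoneFront (b c τ : ℝ) (φ : ℝ → ℝ) : Prop :=
  Monotone φ ∧
  ContDiff ℝ 2 (fun t => φ t - b * φ (t - c * τ)) ∧
  (∀ t : ℝ,
    deriv (deriv (fun r => φ r - b * φ (r - c * τ))) t
      - c * deriv (fun r => φ r - b * φ (r - c * τ)) t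
      + φ t * (1 - φ (t - c * τ)) = 0) ∧
  Tendsto φ atBot (nhds 0) ∧ Tendsto φ atTop (nhds 1)

section Calculus

open Set Topology

theorem antitoneOn_of_hasDerivAt_le_zero {s : Set ℝ} (hs : Convex ℝ s) {f f' : ℝ → ℝ}
    (hf : ∀ x ∈ s, HasDerivAt f (f' x) x) (h : ∀ x ∈ s, f' x ≤ 0) : AntitoneOn f s :=
  antitoneOn_of_hasDerivWithinAt_nonpos hs
    (fun x hx => (hf x hx).continuousAt.continuousWithinAt)
    (fun x hx => (hf x (interior_subset hx)).hasDerivWithinAt)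
    (fun x hx => h x (interior_subset hx))

theorem HasDerivAt.exp_mul {f : ℝ → ℝ} {f' t : ℝ} (a : ℝ) (hf : HasDerivAt f f' t) :
    HasDerivAt (fun s => Real.exp (a * s) * f s) (Real.exp (a * t) * (f' + a * f t)) t := by
  have h1 : HasDerivAt (fun s : ℝ => Real.exp (a * s)) (Real.exp (a * t) * a) t := by
    simpa using ((hasDerivAt_id t).const_mul a).exp
  exact (h1.mul hf).congr_deriv (by ring)

/-- If `f' ≤ a f` then `e^{-at} f` decreases. -/
theorem antitoneOn_exp_mul {s : Set ℝ} (hs : Convex ℝ s) {f f' : ℝ → ℝ} {a : ℝ}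
    (hf : ∀ x ∈ s, HasDerivAt f (f' x) x) (h : ∀ x ∈ s, f' x ≤ a * f x) :
    AntitoneOn (fun t => Real.exp (-a * t) * f t) s :=
  antitoneOn_of_hasDerivAt_le_zero hs (fun x hx => (hf x hx).exp_mul (-a)) fun x hx =>
    mul_nonpos_of_nonneg_of_nonpos (Real.exp_pos _).le (by linarith [h x hx])

theorem tendsto_exp_neg_mul_atTop {a : ℝ} (ha : 0 < a) :
    Tendsto (fun t : ℝ => Real.exp (-a * t)) atTop (𝓝 0) := by
  refine Real.tendsto_exp_atBot.comp ?_
  exact tendsto_id.const_mul_atTop_of_neg (by linarith)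

/-- A bounded function with `a f ≤ f'` on a half-line, `a > 0`, is nonpositive there. -/
theorem nonpos_of_mul_le_hasDerivAt {f f' : ℝ → ℝ} {a C T : ℝ} (ha : 0 < a)
    (hf : ∀ t ≥ T, HasDerivAt f (f' t) t) (h : ∀ t ≥ T, a * f t ≤ f' t)
    (hC : ∀ t ≥ T, f t ≤ C) : ∀ t ≥ T, f t ≤ 0 := by
  intro t ht
  have hanti := antitoneOn_exp_mul (f := fun t => - f t) (a := a) (convex_Ici T)
    (fun x hx => (hf x hx).neg) (fun x hx => by have := h x hx; simp only [mul_neg]; linarith)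
  have hle : Real.exp (-a * t) * f t ≤ 0 := by
    have hlim : Tendsto (fun s : ℝ => Real.exp (-a * s) * C) atTop (𝓝 0) := by
      simpa using (tendsto_exp_neg_mul_atTop ha).mul_const C
    refine ge_of_tendsto hlim ?_
    filter_upwards [eventually_ge_atTop t] with s hs
    have h1 := hanti (show t ∈ Ici T from ht) (show s ∈ Ici T from le_trans ht hs) hs
    have h2 := mul_le_mul_of_nonneg_left (hC s (le_trans ht hs)) (Real.exp_pos (-a * s)).le
    simp only [mul_neg] at h1
    linarith
  by_contra! hpos
  have := mul_pos (Real.exp_pos (-a * t)) hpos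
  linarith

/-- If `f` converges at infinity then its derivative cannot have a nonzero limit. -/
theorem exists_abs_deriv_le_of_tendsto {f f' : ℝ → ℝ} {a : ℝ}
    (hf : ∀ t, HasDerivAt f (f' t) t) (hlim : Tendsto f atTop (𝓝 a)) {ε : ℝ} (hε : 0 < ε)
    (T : ℝ) : ∃ t > T, |f' t| ≤ ε := by
  have h1 : Tendsto (fun t => f (t + 1) - f t) atTop (𝓝 0) := by
    simpa using (hlim.comp (tendsto_atTop_add_const_right _ 1 tendsto_id)).sub hlim
  have h2 := (h1.eventually (Metric.ball_mem_nhds 0 hε)).and (eventually_gt_atTop T)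
  obtain ⟨t, ht, hT⟩ := h2.exists
  obtain ⟨s, hs, hs'⟩ := exists_hasDerivAt_eq_slope f f' (show t < t + 1 by linarith)
    (fun x _ => (hf x).continuousAt.continuousWithinAt) (fun x _ => hf x)
  refine ⟨s, by linarith [hs.1], ?_⟩
  rw [hs']
  simp only [dist_zero_right, Real.norm_eq_abs] at ht
  simpa using ht.le

theorem deriv_limit_eq_zero {f f' : ℝ → ℝ} {a L : ℝ}
    (hf : ∀ t, HasDerivAt f (f' t) t) (hlim : Tendsto f atTop (𝓝 a))
    (hL : Tendsto f' atTop (𝓝 L)) : L = 0 := by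
  by_contra hne
  have hpos : 0 < |L| / 2 := by positivity
  have h1 : ∀ᶠ t in atTop, |L| / 2 < |f' t| :=
    hL.abs.eventually (lt_mem_nhds (by linarith))
  obtain ⟨T, hT⟩ := eventually_atTop.1 h1
  obtain ⟨t, ht, ht'⟩ := exists_abs_deriv_le_of_tendsto hf hlim hpos T
  linarith [hT t ht.le]

theorem deriv_tendsto_zero_of_antitone {f f' : ℝ → ℝ} {a c : ℝ}
    (hf : ∀ t, HasDerivAt f (f' t) t) (hlim : Tendsto f atTop (𝓝 a))
    (hm : Antitone fun t => f' t - c * f t) : Tendsto f' atTop (𝓝 0) := by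
  rcases tendsto_atTop_of_antitone hm with h | ⟨L, hL⟩
  · exfalso
    have h1 : Tendsto f' atTop atBot := by
      have := h.atBot_add (hlim.const_mul c)
      simpa using this
    obtain ⟨T, hT⟩ := eventually_atTop.1 (h1.eventually (eventually_lt_atBot (-1)))
    obtain ⟨t, ht, ht'⟩ := exists_abs_deriv_le_of_tendsto hf hlim one_pos T
    have := hT t ht.le
    have := (abs_le.1 ht').1
    linarith
  · have h1 : Tendsto f' atTop (𝓝 (L + c * a)) := by
      simpa using hL.add (hlim.const_mul c)
    rwa [deriv_limit_eq_zero hf hlim h1] at h1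

end Calculus

section Profile

open Set Topology

/-- Nondecreasing `[0,1]`-valued solutions of `v'' - c v' + k φ(t) (1 - φ(t-h)) = 0`, where
`v(t) = φ(t) - b φ(t-h)` and `p = v'`. -/
structure IsProfile (b c h k : ℝ) (φ p : ℝ → ℝ) : Prop where
  mono : Monotone φ
  nonneg : ∀ t, 0 ≤ φ t
  le_one : ∀ t, φ t ≤ 1
  hasDerivAt_v : ∀ t, HasDerivAt (fun s => φ s - b * φ (s - h)) (p t) t
  hasDerivAt_p : ∀ t, HasDerivAt p (c * p t - k * (φ t * (1 - φ (t - h)))) t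

theorem tendsto_sub_const_atTop (h : ℝ) : Tendsto (fun t : ℝ => t - h) atTop atTop := by
  simpa [sub_eq_add_neg] using tendsto_atTop_add_const_right atTop (-h) (tendsto_id (α := ℝ))

theorem tendsto_sub_const_atBot (h : ℝ) : Tendsto (fun t : ℝ => t - h) atBot atBot := by
  simpa [sub_eq_add_neg] using tendsto_atBot_add_const_right atBot (-h) (tendsto_id (α := ℝ))

namespace IsProfile

variable {b c h k : ℝ} {φ p : ℝ → ℝ}

theorem reaction_nonneg (hφ : IsProfile b c h k φ p) (t : ℝ) :
    0 ≤ φ t * (1 - φ (t - h)) :=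
  mul_nonneg (hφ.nonneg t) (by linarith [hφ.le_one (t - h)])

theorem hasDerivAt_sub (hφ : IsProfile b c h k φ p) (t : ℝ) :
    HasDerivAt (fun s => p s - c * (φ s - b * φ (s - h))) (-(k * (φ t * (1 - φ (t - h))))) t := by
  exact ((hφ.hasDerivAt_p t).sub ((hφ.hasDerivAt_v t).const_mul c)).congr_deriv (by ring)

theorem antitone_sub (hφ : IsProfile b c h k φ p) (hk : 0 < k) :
    Antitone fun t => p t - c * (φ t - b * φ (t - h)) :=
  antitone_of_hasDerivAt_nonpos hφ.hasDerivAt_sub fun t => by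
    have := mul_nonneg hk.le (hφ.reaction_nonneg t)
    simpa using this

theorem v_tendsto_atTop {l : ℝ} (hl : Tendsto φ atTop (𝓝 l)) :
    Tendsto (fun t => φ t - b * φ (t - h)) atTop (𝓝 (l - b * l)) :=
  hl.sub ((hl.comp (tendsto_sub_const_atTop h)).const_mul b)

theorem v_tendsto_atBot {l : ℝ} (hl : Tendsto φ atBot (𝓝 l)) :
    Tendsto (fun t => φ t - b * φ (t - h)) atBot (𝓝 (l - b * l)) :=
  hl.sub ((hl.comp (tendsto_sub_const_atBot h)).const_mul b)

theorem p_tendsto_atTop (hφ : IsProfile b c h k φ p) (hk : 0 < k) {l : ℝ}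
    (hl : Tendsto φ atTop (𝓝 l)) : Tendsto p atTop (𝓝 0) :=
  deriv_tendsto_zero_of_antitone hφ.hasDerivAt_v (v_tendsto_atTop hl) (hφ.antitone_sub hk)

theorem p_tendsto_atBot (hφ : IsProfile b c h k φ p) (hk : 0 < k) {l : ℝ}
    (hl : Tendsto φ atBot (𝓝 l)) : Tendsto p atBot (𝓝 0) := by
  have h1 : ∀ t, HasDerivAt (fun s => φ (-s) - b * φ (-s - h)) (-p (-t)) t := fun t => by
    simpa using! (hφ.hasDerivAt_v (-t)).comp t (hasDerivAt_neg t)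
  have h2 := deriv_tendsto_zero_of_antitone (c := -c) h1
    ((v_tendsto_atBot hl).comp tendsto_neg_atTop_atBot) (by
      intro s t hst
      have := hφ.antitone_sub hk (neg_le_neg hst)
      dsimp only at this ⊢
      linarith)
  have h3 := (h2.comp tendsto_neg_atBot_atTop).neg
  simpa [Function.comp_def] using h3

theorem limit_atTop (hφ : IsProfile b c h k φ p) (hk : 0 < k) {l : ℝ}
    (hl : Tendsto φ atTop (𝓝 l)) : l * (1 - l) = 0 := by
  have hp := hφ.p_tendsto_atTop hk hl
  have h1 := (hp.const_mul c).sub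
    ((hl.mul ((hl.comp (tendsto_sub_const_atTop h)).const_sub 1)).const_mul k)
  have h2 := deriv_limit_eq_zero hφ.hasDerivAt_p hp h1
  have h3 : k * (l * (1 - l)) = 0 := by linarith
  exact (mul_eq_zero.1 h3).resolve_left hk.ne'

theorem limit_atBot (hφ : IsProfile b c h k φ p) (hk : 0 < k) {l : ℝ}
    (hl : Tendsto φ atBot (𝓝 l)) : l * (1 - l) = 0 := by
  have hp := hφ.p_tendsto_atBot hk hl
  have h1 := (hp.const_mul c).sub
    ((hl.mul ((hl.comp (tendsto_sub_const_atBot h)).const_sub 1)).const_mul k)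
  have hd : ∀ t, HasDerivAt (fun s => p (-s))
      (-(c * p (-t) - k * (φ (-t) * (1 - φ (-t - h))))) t := fun t => by
    simpa using! (hφ.hasDerivAt_p (-t)).comp t (hasDerivAt_neg t)
  have h2 := deriv_limit_eq_zero hd (hp.comp tendsto_neg_atTop_atBot)
    (h1.comp tendsto_neg_atTop_atBot).neg
  have h3 : k * (l * (1 - l)) = 0 := by linarith
  exact (mul_eq_zero.1 h3).resolve_left hk.ne'

theorem tendsto_atTop_ciSup (hφ : IsProfile b c h k φ p) :
    Tendsto φ atTop (𝓝 (⨆ t, φ t)) :=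
  _root_.tendsto_atTop_ciSup hφ.mono ⟨1, by rintro _ ⟨t, rfl⟩; exact hφ.le_one t⟩

theorem tendsto_atBot_ciInf (hφ : IsProfile b c h k φ p) :
    Tendsto φ atBot (𝓝 (⨅ t, φ t)) :=
  _root_.tendsto_atBot_ciInf hφ.mono ⟨0, by rintro _ ⟨t, rfl⟩; exact hφ.nonneg t⟩

/-- A profile taking some value strictly between `0` and `1` connects the two equilibria. -/
theorem limits (hφ : IsProfile b c h k φ p) (hk : 0 < k) {s : ℝ} (h0 : 0 < φ s) (h1 : φ s < 1) :
    Tendsto φ atBot (𝓝 0) ∧ Tendsto φ atTop (𝓝 1) := by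
  have hb := hφ.tendsto_atBot_ciInf
  have ht := hφ.tendsto_atTop_ciSup
  have eb := hφ.limit_atBot hk hb
  have et := hφ.limit_atTop hk ht
  have lb : (⨅ t, φ t) ≤ φ s := hφ.mono.le_of_tendsto hb s
  have lt : φ s ≤ ⨆ t, φ t := hφ.mono.ge_of_tendsto ht s
  constructor
  · have : (⨅ t, φ t) = 0 := (mul_eq_zero.1 eb).resolve_right (by linarith)
    rwa [this] at hb
  · have : (⨆ t, φ t) = 1 := by
      have := (mul_eq_zero.1 et).resolve_left (by linarith)
      linarith
    rwa [this] at ht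

theorem v_nonneg (hφ : IsProfile b c h k φ p) (hb0 : 0 ≤ b) (hh : 0 < h) (t : ℝ) :
    (1 - b) * φ t ≤ φ t - b * φ (t - h) := by
  have := mul_le_mul_of_nonneg_left (hφ.mono (show t - h ≤ t by linarith)) hb0
  linarith

theorem p_nonneg (hφ : IsProfile b c h k φ p) (hk : 0 < k) (hc : 0 < c) (t : ℝ) : 0 ≤ p t := by
  have hp := hφ.p_tendsto_atTop hk hφ.tendsto_atTop_ciSup
  have h1 : Tendsto (fun s => Real.exp (-c * s) * p s) atTop (𝓝 0) := by
    simpa using (tendsto_exp_neg_mul_atTop hc).mul hp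
  have h2 := antitoneOn_exp_mul (a := c) convex_univ (fun x _ => hφ.hasDerivAt_p x) fun x _ => by
    have := mul_nonneg hk.le (hφ.reaction_nonneg x)
    linarith
  have h3 : 0 ≤ Real.exp (-c * t) * p t := (antitoneOn_univ.1 h2).le_of_tendsto h1 t
  exact nonneg_of_mul_nonneg_right h3 (Real.exp_pos _)

theorem p_le (hφ : IsProfile b c h k φ p) (hb1 : b < 1)
    (hk : 0 < k) (hc : 0 < c) (t : ℝ) :
    p t ≤ c * (φ t - b * φ (t - h)) := by
  have hl := hφ.tendsto_atBot_ciInf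
  have hl0 : 0 ≤ ⨅ t, φ t := le_ciInf hφ.nonneg
  have h1 := (hφ.p_tendsto_atBot hk hl).sub ((v_tendsto_atBot (b := b) (h := h) hl).const_mul c)
  have h2 := (hφ.antitone_sub hk).ge_of_tendsto h1 t
  have h3 : 0 ≤ c * ((1 - b) * ⨅ t, φ t) :=
    mul_nonneg hc.le (mul_nonneg (by linarith) hl0)
  nlinarith

theorem p_le_const (hφ : IsProfile b c h k φ p) (hb0 : 0 ≤ b) (hb1 : b < 1)
    (hk : 0 < k) (hc : 0 < c) (t : ℝ) : p t ≤ c := by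
  have h1 := hφ.p_le hb1 hk hc t
  have h2 := mul_nonneg hb0 (hφ.nonneg (t - h))
  have h3 := hφ.le_one t
  nlinarith

end IsProfile

end Profile

section GrowthAtMinusInfinity

open Set Topology

theorem nonneg_of_mul_shift_le {D : ℝ → ℝ} {b h C T : ℝ} (hb0 : 0 ≤ b) (hb1 : b < 1) (hh : 0 < h)
    (hC : ∀ t, -C ≤ D t) (hD : ∀ t ≤ T, b * D (t - h) ≤ D t) : ∀ t ≤ T, 0 ≤ D t := by
  have key : ∀ n : ℕ, ∀ t ≤ T, -(b ^ n * C) ≤ D t := by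
    intro n
    induction n with
    | zero => intro t _; simpa using hC t
    | succ n ih =>
      intro t ht
      have h1 := mul_le_mul_of_nonneg_left (ih (t - h) (by linarith)) hb0
      have h2 := hD t ht
      rw [pow_succ]
      linarith
  intro t ht
  have hlim : Tendsto (fun n : ℕ => -(b ^ n * C)) atTop (𝓝 0) := by
    simpa using ((tendsto_pow_atTop_nhds_zero_of_lt_one hb0 hb1).mul_const C).neg
  exact le_of_tendsto' hlim fun n => key n t ht

namespace IsProfile

variable {b c h k : ℝ} {φ p : ℝ → ℝ}

theorem pos (hφ : IsProfile b c h k φ p) (hb0 : 0 ≤ b) (hb1 : b < 1) (hh : 0 < h)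
    (hk : 0 < k) (hc : 0 < c) (htop : Tendsto φ atTop (𝓝 1)) (t : ℝ) : 0 < φ t := by
  by_contra! hle
  have hanti := antitoneOn_univ.1 <| antitoneOn_exp_mul (a := c) convex_univ
    (fun x _ => hφ.hasDerivAt_v x) (fun x _ => hφ.p_le hb1 hk hc x)
  obtain ⟨s, hs, hts⟩ := ((htop.eventually (lt_mem_nhds one_pos)).and
    (eventually_ge_atTop t)).exists
  have h1 := hanti hts
  dsimp only at h1
  have h2 : φ t - b * φ (t - h) ≤ 0 := by
    have := mul_nonneg hb0 (hφ.nonneg (t - h))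
    linarith
  have h3 := mul_nonpos_of_nonneg_of_nonpos (Real.exp_pos (-c * t)).le h2
  have h4 : 0 < φ s - b * φ (s - h) :=
    lt_of_lt_of_le (mul_pos (by linarith) hs) (hφ.v_nonneg hb0 hh s)
  have h5 := mul_pos (Real.exp_pos (-c * s)) h4
  linarith

theorem exp_mul_le_shift (hφ : IsProfile b c h k φ p) (hb0 : 0 ≤ b) (hb1 : b < 1) (hh : 0 < h)
    {r T : ℝ} (hr : ∀ t ≤ T, p t ≤ r * (φ t - b * φ (t - h))) :
    ∀ t ≤ T, Real.exp (-r * h) * φ t ≤ φ (t - h) := by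
  have hanti := antitoneOn_exp_mul (a := r) (convex_Iic T)
    (fun x _ => hφ.hasDerivAt_v x) (fun x hx => hr x hx)
  have key := nonneg_of_mul_shift_le (D := fun t => φ (t - h) - Real.exp (-r * h) * φ t)
    (C := Real.exp (-r * h)) (T := T) hb0 hb1 hh ?_ ?_
  · intro t ht
    have := key t ht
    linarith
  · intro t
    have h1 := hφ.nonneg (t - h)
    have h2 := mul_le_mul_of_nonneg_left (hφ.le_one t) (Real.exp_pos (-r * h)).le
    linarith
  · intro t ht
    have h1 := hanti (show t - h ∈ Iic T by simp only [mem_Iic]; linarith)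
      (show t ∈ Iic T from ht) (by linarith)
    have h2 : Real.exp (-r * t) = Real.exp (-r * (t - h)) * Real.exp (-r * h) := by
      rw [← Real.exp_add]; congr 1; ring
    dsimp only at h1
    rw [h2, mul_assoc] at h1
    have h3 := le_of_mul_le_mul_left h1 (Real.exp_pos _)
    linarith

theorem growth_step (hφ : IsProfile b c h 1 φ p) (hb0 : 0 ≤ b) (hb1 : b < 1) (hh : 0 < h)
    (hc : 0 < c) (htop : Tendsto φ atTop (𝓝 1)) {T ε m r : ℝ} (hε : ε ≤ 1) (hm : 0 < m)
    (hT : ∀ t ≤ T, φ (t - h) ≤ ε) (hr0 : 0 ≤ r) (hrc : r ≤ c)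
    (hmr : m / 2 ≤ (r ^ 2 - c * r) * (1 - b * Real.exp (-r * h)) + (1 - ε))
    (hr : ∀ t ≤ T, p t ≤ r * (φ t - b * φ (t - h))) :
    ∀ t ≤ T, p t ≤ (r - m / (4 * c)) * (φ t - b * φ (t - h)) := by
  set v : ℝ → ℝ := fun t => φ t - b * φ (t - h) with hv
  set η := m / (4 * c) with hη
  have hηc : η * c = m / 4 := by rw [hη]; field_simp
  have hη0 : 0 < η := by positivity
  have hvpos : ∀ t, 0 < v t := fun t =>
    lt_of_lt_of_le (mul_pos (by linarith) (hφ.pos hb0 hb1 hh one_pos hc htop t))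
      (hφ.v_nonneg hb0 hh t)
  have he1 : Real.exp (-r * h) ≤ 1 := Real.exp_le_one_iff.2 (by nlinarith)
  have he0 := Real.exp_pos (-r * h)
  set d := 1 - b * Real.exp (-r * h) with hd
  have hd0 : 0 < d := by nlinarith
  have hd1 : d ≤ 1 := by nlinarith [mul_nonneg hb0 he0.le]
  -- the reaction term dominates `Q v`
  set Q := (1 - ε) / d with hQ
  have hQd : Q * d = 1 - ε := by rw [hQ]; field_simp
  have hQK : m / 2 ≤ r ^ 2 - c * r + Q := by
    have h1 : m / 2 ≤ (r ^ 2 - c * r + Q) * d := by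
      rw [add_mul, hQd]; exact hmr
    have h2 : 0 ≤ r ^ 2 - c * r + Q := by
      by_contra! hneg
      nlinarith [mul_neg_of_neg_of_pos hneg hd0]
    nlinarith
  have hQ0 : 0 ≤ Q := div_nonneg (by linarith) hd0.le
  have hreac : ∀ t ≤ T, Q * v t ≤ φ t * (1 - φ (t - h)) := by
    intro t ht
    have h1 := hφ.exp_mul_le_shift hb0 hb1 hh hr t ht
    have h2 : v t ≤ d * φ t := by
      simp only [hv, hd]
      nlinarith [mul_le_mul_of_nonneg_left h1 hb0]
    have h3 : Q * v t ≤ Q * (d * φ t) := mul_le_mul_of_nonneg_left h2 hQ0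
    have h4 : Q * (d * φ t) = (1 - ε) * φ t := by rw [← mul_assoc, hQd]
    have h5 := mul_le_mul_of_nonneg_left (hT t ht) (hφ.nonneg t)
    nlinarith
  set q := r - η with hq
  intro t₀ ht₀
  by_contra! hlt
  -- once `p > q v`, the same holds at all earlier times
  have hback : ∀ t ≤ t₀, q * v t < p t := by
    have hanti := antitoneOn_exp_mul (f := fun s => p s - q * v s) (a := c - q) (convex_Iic T)
      (fun x _ => (hφ.hasDerivAt_p x).sub ((hφ.hasDerivAt_v x).const_mul q)) (fun x hx => by
        have h1 := hreac x hx
        have h2 : 0 ≤ q ^ 2 - c * q + Q := by simp only [hq]; nlinarith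
        have h3 := mul_nonneg h2 (hvpos x).le
        nlinarith)
    intro t ht
    have h1 := hanti (show t ∈ Iic T from le_trans ht ht₀) (show t₀ ∈ Iic T from ht₀) ht
    dsimp only at h1
    have h2 : 0 < Real.exp (-(c - q) * t₀) * (p t₀ - q * v t₀) :=
      mul_pos (Real.exp_pos _) (by simp only [hv]; linarith)
    have h3 := pos_of_mul_pos_right (lt_of_lt_of_le h2 h1) (Real.exp_pos _).le
    linarith
  have hratio : AntitoneOn (fun t => p t / v t + m / 4 * t) (Iic t₀) := by
    refine antitoneOn_of_hasDerivAt_le_zero (convex_Iic t₀) (fun x _ =>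
      ((hφ.hasDerivAt_p x).div (hφ.hasDerivAt_v x) (hvpos x).ne').add
        ((hasDerivAt_id x).const_mul (m / 4))) ?_
    intro x hx
    have h1 := hback x hx
    have h2 := hr x (le_trans hx ht₀)
    have h3 := hreac x (le_trans hx ht₀)
    have hvx := hvpos x
    change p x ≤ r * v x at h2
    have h4 : ((c * p x - 1 * (φ x * (1 - φ (x - h)))) * v x - p x * p x) / v x ^ 2 ≤ -(m / 4) := by
      rw [div_le_iff₀ (by positivity)]
      have h5 : (r * v x - p x) * (r * v x + p x - c * v x) ≤ η * v x * (c * v x) := by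
        have h6 : r * v x ≤ c * v x := mul_le_mul_of_nonneg_right hrc hvx.le
        have h7 : 0 ≤ c * v x := by positivity
        calc (r * v x - p x) * (r * v x + p x - c * v x)
            ≤ (r * v x - p x) * (c * v x) :=
              mul_le_mul_of_nonneg_left (by linarith) (by linarith)
          _ ≤ η * v x * (c * v x) := mul_le_mul_of_nonneg_right (by simp only [hq] at h1; linarith) h7
      have h8 : η * v x * (c * v x) = m / 4 * v x ^ 2 := by rw [← hηc]; ring
      have h9 := mul_le_mul_of_nonneg_right h3 hvx.le
      have h10 := mul_le_mul_of_nonneg_right hQK (sq_nonneg (v x))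
      nlinarith
    rw [mul_one]
    linarith
  have hfar := hratio (show t₀ - 4 * (η + 1) / m ∈ Iic t₀ by
    simp only [mem_Iic, sub_le_self_iff]; positivity) self_mem_Iic
    (by simp only [sub_le_self_iff]; positivity)
  dsimp only at hfar
  have h1 : q < p t₀ / v t₀ := by rw [lt_div_iff₀ (hvpos t₀)]; exact hlt
  set s := t₀ - 4 * (η + 1) / m with hs
  have h2 : p s / v s ≤ r := by
    rw [div_le_iff₀ (hvpos s)]
    refine hr s (le_trans ?_ ht₀)
    simp only [hs, sub_le_self_iff]; positivity
  have h3 : m / 4 * s = m / 4 * t₀ - (η + 1) := by rw [hs]; field_simp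
  linarith

theorem chi0_pos_somewhere (hφ : IsProfile b c h 1 φ p) (hb0 : 0 ≤ b) (hb1 : b < 1) (hh : 0 < h)
    (hc : 0 < c) (hbot : Tendsto φ atBot (𝓝 0)) (htop : Tendsto φ atTop (𝓝 1)) :
    ∃ z ∈ Icc 0 c, (z ^ 2 - c * z) * (1 - b * Real.exp (-z * h)) + 1 ≤ 0 := by
  by_contra! hpos
  obtain ⟨z₀, hz₀, hmin⟩ := isCompact_Icc.exists_isMinOn (nonempty_Icc.2 hc.le)
    (f := fun z : ℝ => (z ^ 2 - c * z) * (1 - b * Real.exp (-z * h)) + 1) (by fun_prop)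
  set m := (z₀ ^ 2 - c * z₀) * (1 - b * Real.exp (-z₀ * h)) + 1 with hm
  have hm0 : 0 < m := hpos z₀ hz₀
  have hmin' : ∀ z ∈ Icc 0 c, m ≤ (z ^ 2 - c * z) * (1 - b * Real.exp (-z * h)) + 1 :=
    fun z hz => hmin hz
  have hm1 : m ≤ 1 := by simpa using hmin' 0 ⟨le_rfl, hc.le⟩
  obtain ⟨T, hT⟩ := eventually_atBot.1
    ((hbot.comp (tendsto_sub_const_atBot h)).eventually (gt_mem_nhds (half_pos hm0)))
  set η := m / (4 * c) with hη
  have hη0 : 0 < η := by positivity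
  have hpv : ∀ t, 0 < φ t - b * φ (t - h) := fun t =>
    lt_of_lt_of_le (mul_pos (by linarith) (hφ.pos hb0 hb1 hh one_pos hc htop t))
      (hφ.v_nonneg hb0 hh t)
  have key : ∀ n : ℕ, ∀ t ≤ T, p t ≤ (c - n * η) * (φ t - b * φ (t - h)) := by
    intro n
    induction n with
    | zero => intro t _; simpa using hφ.p_le hb1 one_pos hc t
    | succ n ih =>
      have h0 : 0 ≤ c - n * η := nonneg_of_mul_nonneg_left
        ((hφ.p_nonneg one_pos hc T).trans (ih T le_rfl)) (hpv T)
      have hle : c - n * η ≤ c := by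
        have : 0 ≤ (n : ℝ) * η := by positivity
        linarith
      have h1 := hφ.growth_step hb0 hb1 hh hc htop (ε := m / 2) (by linarith) hm0
        (fun t ht => (hT t ht).le) h0 hle
        (by linarith [hmin' (c - n * η) ⟨h0, hle⟩]) ih
      intro t ht
      refine (h1 t ht).trans_eq ?_
      push_cast
      ring
  obtain ⟨n, hn⟩ := exists_nat_gt (c / η)
  rw [div_lt_iff₀ hη0] at hn
  have h1 := key n T le_rfl
  have h2 := hφ.p_nonneg one_pos hc T
  have h3 := mul_neg_of_neg_of_pos (show c - n * η < 0 by linarith) (hpv T)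
  linarith

end IsProfile

theorem exists_pos_chi0_zero {b c τ : ℝ} (hb0 : 0 ≤ b) (hb1 : b < 1) (hτ : 0 < τ) (hc : 0 < c)
    {z : ℝ} (hz : z ∈ Icc 0 c)
    (hle : (z ^ 2 - c * z) * (1 - b * Real.exp (-z * (c * τ))) + 1 ≤ 0) :
    ∃ z > (0 : ℝ), chi0 b c τ z = 0 := by
  have hcont : ContinuousOn
      (fun z : ℝ => (z ^ 2 - c * z) * (1 - b * Real.exp (-z * (c * τ))) + 1) (Icc 0 z) := by
    fun_prop
  obtain ⟨x, hx, hx0⟩ := intermediate_value_Icc' hz.1 hcont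
    (show (0 : ℝ) ∈ Icc _ _ from ⟨hle, by simp⟩)
  dsimp only at hx0
  have hxpos : 0 < x := by
    rcases hx.1.lt_or_eq with h | h
    · exact h
    · rw [← h] at hx0; norm_num at hx0
  refine ⟨x, hxpos, ?_⟩
  have he : Real.exp (-x * (c * τ)) ≤ 1 := Real.exp_le_one_iff.2 (by
    have := mul_pos hxpos (mul_pos hc hτ); linarith)
  have hd : 0 < 1 - b * Real.exp (-x * (c * τ)) := by
    nlinarith [Real.exp_pos (-x * (c * τ))]
  have he' : -(x * c * τ) = -x * (c * τ) := by ring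
  have hd' := hd.ne'
  rw [chi0, he', add_comm, div_add' _ _ _ hd', add_comm, hx0, zero_div]

end GrowthAtMinusInfinity

section DecayAtPlusInfinity

open Set Topology

theorem exists_lipschitz_deriv_of_sub_shift {w y y' : ℝ → ℝ} {b h C : ℝ}
    (hb0 : 0 ≤ b) (hb1 : b < 1) (hw : ∀ t, |w t| ≤ 1) (hy : ∀ t, y t = w t - b * w (t - h))
    (hd : ∀ t, HasDerivAt y (y' t) t) (hC : ∀ t, |y' t| ≤ C) :
    ∃ w' : ℝ → ℝ, (∀ t, HasDerivAt w (w' t) t) ∧ (∀ t, w' t = b * w' (t - h) + y' t) ∧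
      ∃ C', ∀ t, w' t ≤ C' := by
  have hgeo := summable_geometric_of_lt_one hb0 hb1
  have hbound : ∀ (n : ℕ) (t : ℝ), ‖b ^ n * y' (t - n * h)‖ ≤ b ^ n * C := fun n t => by
    rw [norm_mul, Real.norm_of_nonneg (pow_nonneg hb0 n)]
    exact mul_le_mul_of_nonneg_left (hC _) (pow_nonneg hb0 n)
  have hsum' : ∀ t, Summable fun n : ℕ => b ^ n * y' (t - n * h) := fun t =>
    Summable.of_norm_bounded (hgeo.mul_right C) fun n => hbound n t
  have hpart : ∀ t (n : ℕ), ∑ i ∈ Finset.range n, b ^ i * y (t - i * h)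
      = w t - b ^ n * w (t - n * h) := by
    intro t n
    induction n with
    | zero => simp
    | succ n ih =>
      rw [Finset.sum_range_succ, ih, hy]
      have : t - (n + 1 : ℕ) * h = t - n * h - h := by push_cast; ring
      rw [this]
      ring
  have hsum : ∀ t, HasSum (fun n : ℕ => b ^ n * y (t - n * h)) (w t) := by
    intro t
    have hs : Summable fun n : ℕ => b ^ n * y (t - n * h) := by
      refine Summable.of_norm_bounded (hgeo.mul_right 2) fun n => ?_
      rw [norm_mul, Real.norm_of_nonneg (pow_nonneg hb0 n)]
      refine mul_le_mul_of_nonneg_left ?_ (pow_nonneg hb0 n)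
      rw [hy, Real.norm_eq_abs, abs_le]
      have h1 := abs_le.1 (hw (t - n * h))
      have h2 := abs_le.1 (hw (t - n * h - h))
      constructor <;> nlinarith
    rw [hs.hasSum_iff_tendsto_nat]
    have h0 : Tendsto (fun n : ℕ => b ^ n * w (t - n * h)) atTop (𝓝 0) := by
      refine squeeze_zero_norm (fun n => ?_) (tendsto_pow_atTop_nhds_zero_of_lt_one hb0 hb1)
      rw [norm_mul, Real.norm_of_nonneg (pow_nonneg hb0 n)]
      exact mul_le_of_le_one_right (pow_nonneg hb0 n) (hw _)
    simp_rw [hpart]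
    simpa using h0.const_sub (w t)
  have hw' : w = fun t => ∑' n : ℕ, b ^ n * y (t - n * h) := funext fun t => (hsum t).tsum_eq.symm
  refine ⟨fun t => ∑' n : ℕ, b ^ n * y' (t - n * h), fun t => ?_, fun t => ?_,
    ∑' n : ℕ, b ^ n * C, fun t => ?_⟩
  · rw [hw']
    exact hasDerivAt_tsum (hgeo.mul_right C)
      (fun n x => ((hd (x - n * h)).comp_sub_const x (n * h)).const_mul (b ^ n)) hbound
      (hsum 0).summable t
  · dsimp only
    rw [(hsum' t).tsum_eq_zero_add, ← tsum_mul_left, add_comm]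
    congr 1
    · refine tsum_congr fun n => ?_
      rw [pow_succ', mul_assoc]
      congr 3
      push_cast
      ring
    · simp
  · exact (hsum' t).tsum_le_tsum (fun n => (le_abs_self _).trans (hbound n t)) (hgeo.mul_right C)

namespace IsProfile

variable {b c h : ℝ} {φ p : ℝ → ℝ}

theorem v_le (hφ : IsProfile b c h 1 φ p) (hc : 0 < c)
    (htop : Tendsto φ atTop (𝓝 1)) (t : ℝ) : φ t - b * φ (t - h) ≤ 1 - b := by
  have hmono : Monotone fun t => φ t - b * φ (t - h) :=
    monotone_of_hasDerivAt_nonneg hφ.hasDerivAt_v fun t => hφ.p_nonneg one_pos hc t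
  simpa using hmono.ge_of_tendsto (v_tendsto_atTop (b := b) (h := h) htop) t

theorem lt_one (hφ : IsProfile b c h 1 φ p) (hb0 : 0 ≤ b) (hh : 0 < h)
    (hc : 0 < c) (hbot : Tendsto φ atBot (𝓝 0)) (htop : Tendsto φ atTop (𝓝 1)) (t : ℝ) :
    φ t < 1 := by
  by_contra! hge
  have key : ∀ n : ℕ, ∀ s > t - n * h, φ s = 1 := by
    intro n
    induction n with
    | zero =>
      intro s hs
      have := hφ.mono (show t ≤ s by simpa using hs.le)
      linarith [hφ.le_one s]
    | succ n ih =>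
      intro s hs
      push_cast at hs
      have hs' : t - n * h < s + h := by linarith
      have hone : ∀ r > t - n * h, φ r - b * φ (r - h) = 1 - b := by
        intro r hr
        have h1 := hφ.v_le hc htop r
        have h2 := mul_le_mul_of_nonneg_left (hφ.le_one (r - h)) hb0
        rw [ih r hr] at h1 ⊢
        linarith
      have hp : ∀ r > t - n * h, p r = 0 := by
        intro r hr
        have h1 : HasDerivAt (fun _ : ℝ => 1 - b) (p r) r :=
          (hφ.hasDerivAt_v r).congr_of_eventuallyEq <| by
            filter_upwards [lt_mem_nhds hr] with x hx using (hone x hx).symm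
        exact h1.unique (hasDerivAt_const r _)
      have hp' : HasDerivAt (fun _ : ℝ => (0 : ℝ))
          (c * p (s + h) - 1 * (φ (s + h) * (1 - φ (s + h - h)))) (s + h) :=
        (hφ.hasDerivAt_p (s + h)).congr_of_eventuallyEq <| by
          filter_upwards [lt_mem_nhds hs'] with x hx using (hp x hx).symm
      have h1 := hp'.unique (hasDerivAt_const _ _)
      rw [hp _ hs', ih _ hs', add_sub_cancel_right] at h1
      linarith
  have hall : ∀ s, φ s = 1 := by
    intro s
    obtain ⟨n, hn⟩ := exists_nat_gt ((t - s) / h)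
    rw [div_lt_iff₀ hh] at hn
    exact key n s (by linarith)
  have : Tendsto φ atBot (𝓝 1) := by
    rw [show φ = fun _ => 1 from funext hall]; exact tendsto_const_nhds
  exact zero_ne_one (tendsto_nhds_unique hbot this)

/-- Quantitative positivity of `y(t) = w(t) - b w(t-h)`, `w = 1 - φ`. -/
theorem exists_gap (hφ : IsProfile b c h 1 φ p) (hh : 0 < h)
    (hc : 0 < c) (htop : Tendsto φ atTop (𝓝 1)) :
    ∃ κ > 0, ∃ T, ∀ t ≥ T,
      κ * (1 - φ (t - h / 2)) ≤ 1 - b - (φ t - b * φ (t - h)) := by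
  obtain ⟨T, hT⟩ := eventually_atTop.1 (htop.eventually (lt_mem_nhds (one_half_lt_one (α := ℝ))))
  have hH : 0 < h / 2 := half_pos hh
  have hκ : 0 < Real.exp (-c * (h / 2)) - 1 + c * (h / 2) := by
    have h1 : -c * (h / 2) ≠ 0 := mul_ne_zero (neg_ne_zero.2 hc.ne') hH.ne'
    linarith [Real.add_one_lt_exp h1]
  refine ⟨(Real.exp (-c * (h / 2)) - 1 + c * (h / 2)) / c ^ 2 / 2, by positivity, T, ?_⟩
  intro t ht
  set a := (1 - φ (t - h / 2)) / 2 with ha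
  have ha0 : 0 ≤ a := by rw [ha]; linarith [hφ.le_one (t - h / 2)]
  set e := t + h / 2 with he
  have hexp : ∀ s, HasDerivAt (fun s : ℝ => Real.exp (c * (s - e))) (Real.exp (c * (s - e)) * c) s :=
    fun s => by simpa using (((hasDerivAt_id s).sub_const e).const_mul c).exp
  -- comparison with the solution of the constant-coefficient equation vanishing to first order at `e`
  set x' : ℝ → ℝ := fun s => -p s - a * ((Real.exp (c * (s - e)) - 1) / c) with hx'
  set x : ℝ → ℝ := fun s => (1 - b - (φ s - b * φ (s - h)))
    - a * ((Real.exp (c * (s - e)) - 1 - c * (s - e)) / c ^ 2) with hx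
  have hdx : ∀ s, HasDerivAt x (x' s) s := by
    intro s
    have h1 := ((((hexp s).sub_const 1).sub
      (((hasDerivAt_id s).sub_const e).const_mul c)).div_const (c ^ 2)).const_mul a
    refine (((hφ.hasDerivAt_v s).const_sub (1 - b)).sub h1).congr_deriv ?_
    simp only [hx']
    field_simp
  have hdx' : ∀ s, HasDerivAt x' (-(c * p s - 1 * (φ s * (1 - φ (s - h))))
      - a * Real.exp (c * (s - e))) s := by
    intro s
    refine ((hφ.hasDerivAt_p s).neg.sub
      ((((hexp s).sub_const 1).div_const c).const_mul a)).congr_deriv ?_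
    field_simp
  have hanti : AntitoneOn (fun s => Real.exp (-c * s) * -x' s) (Icc t e) := by
    refine antitoneOn_exp_mul (convex_Icc t e) (fun s _ => (hdx' s).neg) ?_
    intro s hs
    have h1 : 1 / 2 ≤ φ s := (hT s (ht.trans hs.1)).le
    have h2 : φ (s - h) ≤ φ (t - h / 2) := hφ.mono (by linarith [hs.2])
    have h3 : a ≤ φ s * (1 - φ (s - h)) := by nlinarith [hφ.le_one (t - h / 2)]
    have h4 : c * -x' s = c * p s + a * (Real.exp (c * (s - e)) - 1) := by
      simp only [hx']; field_simp; ring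
    rw [h4]
    linarith
  have hx'nonpos : ∀ s ∈ Icc t e, x' s ≤ 0 := by
    intro s hs
    have h1 := hanti hs (right_mem_Icc.2 (by linarith)) hs.2
    have h2 : 0 ≤ -x' e := by
      simpa [hx'] using hφ.p_nonneg one_pos hc e
    have h3 : 0 ≤ Real.exp (-c * s) * -x' s :=
      (mul_nonneg (Real.exp_pos _).le h2).trans h1
    linarith [nonneg_of_mul_nonneg_right h3 (Real.exp_pos _)]
  have h1 := antitoneOn_of_hasDerivAt_le_zero (convex_Icc t e) (fun s _ => hdx s) hx'nonpos
    (left_mem_Icc.2 (by linarith)) (right_mem_Icc.2 (by linarith)) (show t ≤ e by linarith)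
  have h2 : 0 ≤ x e := by
    simp only [hx, sub_self, mul_zero, Real.exp_zero, zero_div, sub_zero]
    linarith [hφ.v_le hc htop e]
  have h3 : t - e = -(h / 2) := by rw [he]; ring
  have h4 : x t = (1 - b - (φ t - b * φ (t - h)))
      - a * ((Real.exp (-c * (h / 2)) - 1 + c * (h / 2)) / c ^ 2) := by
    simp only [hx, h3]
    ring_nf
  have h5 : (Real.exp (-c * (h / 2)) - 1 + c * (h / 2)) / c ^ 2 / 2 * (1 - φ (t - h / 2))
      = a * ((Real.exp (-c * (h / 2)) - 1 + c * (h / 2)) / c ^ 2) := by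
    rw [ha]; ring
  rw [h5]
  linarith

end IsProfile

theorem le_exp_mul_shift {w w' : ℝ → ℝ} {r T s t : ℝ} (hw : ∀ t, HasDerivAt w (w' t) t)
    (hr : ∀ t ≥ T, w' t + r * w t ≤ 0) (hs : 0 ≤ s) (hT : T ≤ t - s) :
    w t ≤ Real.exp (-(r * s)) * w (t - s) := by
  have hanti := antitoneOn_exp_mul (a := -r) (convex_Ici T) (fun x _ => hw x)
    (fun x hx => by linarith [hr x hx])
  have h1 := hanti (show t - s ∈ Ici T from hT) (show t ∈ Ici T by simp only [mem_Ici]; linarith)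
    (by linarith)
  dsimp only at h1
  have h2 : Real.exp (- -r * (t - s)) = Real.exp (- -r * t) * Real.exp (-(r * s)) := by
    rw [← Real.exp_add]; congr 1; ring
  rw [h2, mul_assoc] at h1
  exact le_of_mul_le_mul_left h1 (Real.exp_pos _)

namespace IsProfile

variable {b c h : ℝ} {φ p : ℝ → ℝ}

theorem decay_step (hφ : IsProfile b c h 1 φ p) (hb0 : 0 ≤ b) (hb1 : b < 1) (hh : 0 < h)
    (hc : 0 < c) (hbot : Tendsto φ atBot (𝓝 0)) (htop : Tendsto φ atTop (𝓝 1))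
    {w' : ℝ → ℝ} {C κ T ε r η : ℝ} (hw : ∀ t, HasDerivAt (fun s => 1 - φ s) (w' t) t)
    (hrec : ∀ t, w' t = b * w' (t - h) - p t) (hC : ∀ t, w' t ≤ C) (hκ : 0 < κ)
    (hgap : ∀ t ≥ T, κ * (1 - φ (t - h / 2)) ≤ 1 - b - (φ t - b * φ (t - h)))
    (hε : ∀ t ≥ T, 1 - ε ≤ φ t) (hr0 : 0 ≤ r) (hη : 0 < η)
    (hQ : 0 < 1 - b * Real.exp (r * h) → ((r + 2 * η) ^ 2 + c * (r + 2 * η)) *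
      (1 - b * Real.exp (r * h)) ≤ (1 - ε) * Real.exp (r * h))
    (hr : ∀ᶠ t in atTop, w' t + r * (1 - φ t) ≤ 0) :
    ∀ᶠ t in atTop, w' t + (r + η) * (1 - φ t) ≤ 0 := by
  obtain ⟨T₀, hT₀⟩ := eventually_atTop.1 hr
  set S := max T T₀ + h with hS
  have hST : T ≤ S := by have := le_max_left T T₀; linarith
  have hST₀ : T₀ + h ≤ S := by have := le_max_right T T₀; linarith
  have hwpos : ∀ t, 0 < 1 - φ t := fun t => by linarith [hφ.lt_one hb0 hh hc hbot htop t]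
  set y : ℝ → ℝ := fun t => 1 - b - (φ t - b * φ (t - h)) with hy
  have hypos : ∀ t ≥ S, 0 < y t := fun t ht =>
    lt_of_lt_of_le (mul_pos hκ (hwpos _)) (hgap t (hST.trans ht))
  have hye : ∀ t ≥ S, y t ≤ (Real.exp (-(r * h)) - b) * (1 - φ (t - h)) := by
    intro t ht
    have := le_exp_mul_shift hw hT₀ hh.le (show T₀ ≤ t - h by linarith)
    simp only [hy]
    linarith
  have hd : 0 < Real.exp (-(r * h)) - b :=
    pos_of_mul_pos_left ((hypos S le_rfl).trans_le (hye S le_rfl)) (hwpos _).le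
  have hee : Real.exp (r * h) * Real.exp (-(r * h)) = 1 := by rw [← Real.exp_add]; simp
  set ρ := r + 2 * η with hρ
  have hρ0 : 0 < ρ := by positivity
  have hQ' : (ρ ^ 2 + c * ρ) * (Real.exp (-(r * h)) - b) ≤ 1 - ε := by
    have h1 : 1 - b * Real.exp (r * h) = Real.exp (r * h) * (Real.exp (-(r * h)) - b) := by
      rw [mul_sub, hee]; ring
    have h2 := hQ (by rw [h1]; positivity)
    rw [h1] at h2
    exact le_of_mul_le_mul_left (by linarith) (Real.exp_pos (r * h))
  have hx : ∀ t ≥ S, -p t + ρ * y t ≤ 0 := by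
    refine nonpos_of_mul_le_hasDerivAt (a := c + ρ) (C := ρ) (by positivity)
      (fun t _ => (hφ.hasDerivAt_p t).neg.add
        (((hφ.hasDerivAt_v t).const_sub (1 - b)).const_mul ρ)) ?_ ?_
    · intro t ht
      have h1 := mul_le_mul_of_nonneg_left (hye t ht) (show 0 ≤ ρ ^ 2 + c * ρ by positivity)
      have h2 := mul_le_mul_of_nonneg_right hQ' (hwpos (t - h)).le
      have h3 := mul_le_mul_of_nonneg_right (hε t (hST.trans ht)) (hwpos (t - h)).le
      nlinarith
    · intro t _
      have h1 := hφ.p_nonneg one_pos hc t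
      have h2 : y t ≤ 1 := by
        have h3 := hφ.v_nonneg hb0 hh t
        have h4 := mul_nonneg (show 0 ≤ 1 - b by linarith) (hφ.nonneg t)
        simp only [hy]
        linarith
      nlinarith
  set z : ℝ → ℝ := fun t => w' t + ρ * (1 - φ t) with hz
  have hzrec : ∀ t ≥ S, z t ≤ b * z (t - h) := by
    intro t ht
    have h1 := hx t ht
    simp only [hz, hy, hrec t] at h1 ⊢
    linarith
  have hbw : ∀ t ≥ S, b * (1 - φ (t - h)) ≤ (1 - κ) * (1 - φ t) := by
    intro t ht
    have h1 := hgap t (hST.trans ht)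
    have h2 := mul_le_mul_of_nonneg_left (hφ.mono (show t - h / 2 ≤ t by linarith)) hκ.le
    linarith
  have hκ1 : 0 ≤ 1 - κ := nonneg_of_mul_nonneg_left
    ((mul_nonneg hb0 (hwpos _).le).trans (hbw S le_rfl)) (hwpos S)
  set M := (|C| + ρ) / (1 - φ (S + h)) with hM
  have hM0 : 0 ≤ M := div_nonneg (by positivity) (hwpos _).le
  have hzn : ∀ n : ℕ, ∀ t, S + n * h ≤ t → t ≤ S + (n + 1) * h →
      z t ≤ M * (1 - κ) ^ n * (1 - φ t) := by
    intro n
    induction n with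
    | zero =>
      intro t _ ht
      simp only [Nat.cast_zero, zero_add, one_mul] at ht
      have h1 : M * (1 - φ (S + h)) = |C| + ρ := by
        rw [hM]; exact div_mul_cancel₀ _ (hwpos _).ne'
      have h2 := mul_le_mul_of_nonneg_left (hφ.mono ht) hM0
      have h3 : ρ * (1 - φ t) ≤ ρ := by nlinarith [hφ.nonneg t]
      have h4 := (hC t).trans (le_abs_self C)
      simp only [hz, pow_zero, mul_one]
      linarith
    | succ n ih =>
      intro t ht1 ht2
      push_cast at ht1 ht2
      have hnh : 0 ≤ (n : ℝ) * h := by positivity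
      have htS : t ≥ S := by linarith
      have h1 := mul_le_mul_of_nonneg_left (ih (t - h) (by linarith) (by linarith)) hb0
      have h2 := mul_le_mul_of_nonneg_left (hbw t htS)
        (show 0 ≤ M * (1 - κ) ^ n by positivity)
      calc z t ≤ b * z (t - h) := hzrec t htS
        _ ≤ _ := h1
        _ = M * (1 - κ) ^ n * (b * (1 - φ (t - h))) := by ring
        _ ≤ _ := h2
        _ = _ := by rw [pow_succ]; ring
  have hlim : Tendsto (fun n : ℕ => M * (1 - κ) ^ n) atTop (𝓝 0) := by
    simpa using (tendsto_pow_atTop_nhds_zero_of_lt_one hκ1 (by linarith)).const_mul M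
  obtain ⟨N, hN⟩ := eventually_atTop.1 (hlim.eventually (gt_mem_nhds hη))
  filter_upwards [eventually_ge_atTop (S + N * h)] with t ht
  have hfl : (N : ℝ) ≤ (t - S) / h := by rw [le_div_iff₀ hh]; linarith
  set n := ⌊(t - S) / h⌋₊ with hn
  have h1 : (n : ℝ) * h ≤ t - S := by
    rw [← le_div_iff₀ hh]
    exact Nat.floor_le ((Nat.cast_nonneg N).trans hfl)
  have h2 : t - S < (n + 1) * h := by
    rw [← div_lt_iff₀ hh]; exact Nat.lt_floor_add_one _
  have h3 := hzn n t (by linarith) (by linarith)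
  have h4 := mul_le_mul_of_nonneg_right (hN n (Nat.le_floor hfl)).le (hwpos t).le
  simp only [hz, hρ] at h3
  linarith

theorem chi1_nonneg_somewhere (hφ : IsProfile b c h 1 φ p) (hb0 : 0 ≤ b) (hb1 : b < 1)
    (hh : 0 < h) (hc : 0 < c) (hbot : Tendsto φ atBot (𝓝 0)) (htop : Tendsto φ atTop (𝓝 1)) :
    ∃ r ≥ 0, Real.exp (r * h) - (r ^ 2 + c * r) * (1 - b * Real.exp (r * h)) ≤ 0 := by
  by_contra! hpos
  have hwpos : ∀ t, 0 < 1 - φ t := fun t => by linarith [hφ.lt_one hb0 hh hc hbot htop t]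
  obtain ⟨w', hw, hrec, C, hC⟩ := exists_lipschitz_deriv_of_sub_shift (w := fun t => 1 - φ t)
    (y := fun t => 1 - b - (φ t - b * φ (t - h))) (y' := fun t => -p t) (h := h) (C := c) hb0 hb1
    (fun t => abs_le.2 ⟨by linarith [hφ.le_one t], by linarith [hφ.nonneg t]⟩)
    (fun t => by ring) (fun t => (hφ.hasDerivAt_v t).const_sub (1 - b))
    (fun t => by
      rw [abs_neg, abs_of_nonneg (hφ.p_nonneg one_pos hc t)]
      exact hφ.p_le_const hb0 hb1 one_pos hc t)
  obtain ⟨κ, hκ, T₁, hgap⟩ := hφ.exists_gap hh hc htop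
  -- decay rates of `1 - φ` are bounded
  set L := |2 / h * Real.log κ| with hL
  have hbdd : ∀ r, 0 ≤ r → (∀ᶠ t in atTop, w' t + r * (1 - φ t) ≤ 0) → r ≤ L := by
    intro r hr0 hr
    obtain ⟨T₀, hT₀⟩ := eventually_atTop.1 hr
    set t := max T₁ (T₀ + h / 2)
    have h1 := hgap t (le_max_left _ _)
    have h2 := le_exp_mul_shift hw hT₀ (half_pos hh).le
      (show T₀ ≤ t - h / 2 by have := le_max_right T₁ (T₀ + h / 2); linarith)
    have h3 := mul_nonneg hb0 (hwpos (t - h)).le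
    have h4 : κ ≤ Real.exp (-(r * (h / 2))) :=
      le_of_mul_le_mul_right (by linarith) (hwpos (t - h / 2))
    have h5 := (Real.log_le_iff_le_exp hκ).2 h4
    refine le_trans ?_ (neg_le_abs _)
    have h6 := mul_le_mul_of_nonneg_left h5 (show 0 ≤ 2 / h by positivity)
    have h7 : 2 / h * -(r * (h / 2)) = -r := by field_simp
    linarith
  obtain ⟨r₀, hr₀, hmin⟩ := isCompact_Icc.exists_isMinOn (nonempty_Icc.2 (abs_nonneg _ : 0 ≤ L))
    (f := fun r : ℝ => Real.exp (r * h) - (r ^ 2 + c * r) * (1 - b * Real.exp (r * h)))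
    (by fun_prop)
  set m := Real.exp (r₀ * h) - (r₀ ^ 2 + c * r₀) * (1 - b * Real.exp (r₀ * h)) with hm
  have hm0 : 0 < m := hpos r₀ hr₀.1
  have hmin' : ∀ r ∈ Icc 0 L,
      m ≤ Real.exp (r * h) - (r ^ 2 + c * r) * (1 - b * Real.exp (r * h)) := fun r hr => hmin hr
  set ε := m / 2 * Real.exp (-(L * h)) with hε
  have hε0 : 0 < ε := by positivity
  obtain ⟨T₂, hT₂⟩ := eventually_atTop.1
    (htop.eventually (lt_mem_nhds (show 1 - ε < 1 by linarith)))
  have hL0 : 0 ≤ L := abs_nonneg _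
  set η := min 1 (m / 2 / (4 * L + 2 * c + 4)) with hη
  have hη0 : 0 < η := lt_min one_pos (by positivity)
  have hη1 : η ≤ 1 := min_le_left _ _
  have hηm : η * (4 * L + 2 * c + 4) ≤ m / 2 := by
    rw [← le_div_iff₀ (by positivity)]; exact min_le_right _ _
  have key : ∀ n : ℕ, ∀ᶠ t in atTop, w' t + n * η * (1 - φ t) ≤ 0 := by
    intro n
    induction n with
    | zero =>
      refine Eventually.of_forall fun t => ?_
      have hmono : Monotone fun s => -(1 - φ s) := fun s t hst => by
        simpa using hφ.mono hst
      have := (hw t).neg.nonneg_of_monotone hmono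
      simpa using this
    | succ n ih =>
      have hr0 : 0 ≤ (n : ℝ) * η := by positivity
      have hrL := hbdd _ hr0 ih
      set r := (n : ℝ) * η with hr
      have h1 := hφ.decay_step hb0 hb1 hh hc hbot htop hw (T := max T₁ T₂) (ε := ε) (η := η)
        (fun t => by rw [hrec t]; ring) hC hκ
        (fun t ht => hgap t ((le_max_left _ _).trans ht))
        (fun t ht => (hT₂ t ((le_max_right _ _).trans ht)).le) hr0 hη0 (fun hd => by
          have h2 := hmin' r ⟨hr0, hrL⟩
          have h3 : ε * Real.exp (r * h) ≤ m / 2 := by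
            rw [hε, mul_assoc, ← Real.exp_add]
            have : Real.exp (-(L * h) + r * h) ≤ 1 := Real.exp_le_one_iff.2 (by nlinarith)
            nlinarith
          have h4 : (r + 2 * η) ^ 2 + c * (r + 2 * η) ≤ r ^ 2 + c * r + m / 2 := by
            have h5 : η * r ≤ η * L := mul_le_mul_of_nonneg_left hrL hη0.le
            have h6 : η * η ≤ η * 1 := mul_le_mul_of_nonneg_left hη1 hη0.le
            nlinarith
          have h7 := mul_le_mul_of_nonneg_right h4 hd.le
          have h8 : 1 - b * Real.exp (r * h) ≤ 1 := by
            linarith [mul_nonneg hb0 (Real.exp_pos (r * h)).le]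
          nlinarith) ih
      filter_upwards [h1] with t ht
      have : ((n + 1 : ℕ) : ℝ) * η = r + η := by rw [hr]; push_cast; ring
      rw [this]
      exact ht
  obtain ⟨n, hn⟩ := exists_nat_gt (L / η)
  rw [div_lt_iff₀ hη0] at hn
  exact absurd (hbdd _ (by positivity) (key n)) (not_le.2 hn)

end IsProfile

theorem exists_neg_chi1_zero {b c τ r : ℝ} (hr0 : 0 ≤ r)
    (hle : Real.exp (r * (c * τ)) - (r ^ 2 + c * r) * (1 - b * Real.exp (r * (c * τ))) ≤ 0) :
    ∃ z < (0 : ℝ), chi1 b c τ z = 0 := by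
  have hcont : ContinuousOn (fun r : ℝ => Real.exp (r * (c * τ)) -
      (r ^ 2 + c * r) * (1 - b * Real.exp (r * (c * τ)))) (Icc 0 r) := by
    fun_prop
  obtain ⟨x, hx, hx0⟩ := intermediate_value_Icc' hr0 hcont
    (show (0 : ℝ) ∈ Icc _ _ from ⟨hle, by simp⟩)
  dsimp only at hx0
  have hxpos : 0 < x := by
    rcases hx.1.lt_or_eq with h | h
    · exact h
    · rw [← h] at hx0; norm_num at hx0
  refine ⟨-x, by linarith, ?_⟩
  have hd : 1 - b * Real.exp (x * (c * τ)) ≠ 0 := by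
    intro h
    rw [h, mul_zero, sub_zero] at hx0
    exact (Real.exp_pos _).ne' hx0
  have he : -(-x * c * τ) = x * (c * τ) := by ring
  have h1 : (-x) ^ 2 - c * -x = Real.exp (x * (c * τ)) / (1 - b * Real.exp (x * (c * τ))) := by
    rw [eq_div_iff hd]
    linarith
  rw [chi1, he, h1, sub_self]

end DecayAtPlusInfinity


section Necessity

open Set Topology

theorem contDiff_two_of_hasDerivAt {f f₁ f₂ : ℝ → ℝ} (h₁ : ∀ t, HasDerivAt f (f₁ t) t)
    (h₂ : ∀ t, HasDerivAt f₁ (f₂ t) t) (hc : Continuous f₂) : ContDiff ℝ 2 f := by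
  have e₁ : deriv f = f₁ := funext fun t => (h₁ t).deriv
  have e₂ : deriv f₁ = f₂ := funext fun t => (h₂ t).deriv
  have hf₁ : ContDiff ℝ 1 f₁ := by
    rw [contDiff_one_iff_deriv, e₂]
    exact ⟨fun t => (h₂ t).differentiableAt, hc⟩
  rw [show (2 : WithTop ℕ∞) = 1 + 1 by norm_num, contDiff_succ_iff_deriv, e₁]
  exact ⟨fun t => (h₁ t).differentiableAt, by simp, hf₁⟩

theorem IsMonotoneFront.isProfile {b c τ : ℝ} {φ : ℝ → ℝ} (hφ : IsMonotoneFront b c τ φ) :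
    IsProfile b c (c * τ) 1 φ (deriv fun r => φ r - b * φ (r - c * τ)) := by
  obtain ⟨hmono, hsmooth, heq, hbot, htop⟩ := hφ
  refine ⟨hmono, fun t => hmono.le_of_tendsto hbot t, fun t => hmono.ge_of_tendsto htop t,
    fun t => ((hsmooth.differentiable (by norm_num)) t).hasDerivAt, fun t => ?_⟩
  have h1 : ContDiff ℝ (1 + 1) fun r => φ r - b * φ (r - c * τ) := by
    simpa [one_add_one_eq_two] using hsmooth
  have h2 := (contDiff_succ_iff_deriv.1 h1).2.2.differentiable (by norm_num) t
  exact h2.hasDerivAt.congr_deriv (by linarith [heq t])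

theorem IsProfile.isMonotoneFront {b c τ : ℝ} {φ p : ℝ → ℝ} (hφ : IsProfile b c (c * τ) 1 φ p)
    (hcont : Continuous φ) (hbot : Tendsto φ atBot (𝓝 0)) (htop : Tendsto φ atTop (𝓝 1)) :
    IsMonotoneFront b c τ φ := by
  have hp : Continuous p := continuous_iff_continuousAt.2 fun t => (hφ.hasDerivAt_p t).continuousAt
  have e₁ : deriv (fun r => φ r - b * φ (r - c * τ)) = p := funext fun t =>
    (hφ.hasDerivAt_v t).deriv
  refine ⟨hφ.mono, contDiff_two_of_hasDerivAt hφ.hasDerivAt_v hφ.hasDerivAt_p (by fun_prop),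
    fun t => ?_, hbot, htop⟩
  rw [e₁, (hφ.hasDerivAt_p t).deriv]
  ring

theorem IsMonotoneFront.inD {b c τ : ℝ} {φ : ℝ → ℝ} (hφ : IsMonotoneFront b c τ φ)
    (hb0 : 0 ≤ b) (hb1 : b < 1) (hτ : 0 < τ) (hc : 0 < c) : inD b τ c := by
  have hp := hφ.isProfile
  have hbot := hφ.2.2.2.1
  have htop := hφ.2.2.2.2
  have hh : 0 < c * τ := mul_pos hc hτ
  obtain ⟨z, hz, hle⟩ := hp.chi0_pos_somewhere hb0 hb1 hh hc hbot htop
  obtain ⟨r, hr, hle'⟩ := hp.chi1_nonneg_somewhere hb0 hb1 hh hc hbot htop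
  exact ⟨exists_pos_chi0_zero hb0 hb1 hτ hc hz hle, exists_neg_chi1_zero hr hle'⟩

end Necessity

section ExpMean

open Set Topology MeasureTheory

/-- The Laplace-type average `∫₀^∞ e^{-a u} g(u) du`. -/
noncomputable def expMean (a : ℝ) (g : ℝ → ℝ) : ℝ := ∫ u in Ioi 0, Real.exp (-a * u) * g u

/-- Measurable functions bounded by `C`. -/
structure IsBddMeas (C : ℝ) (g : ℝ → ℝ) : Prop where
  measurable : Measurable g
  abs_le : ∀ t, |g t| ≤ C

theorem IsBddMeas.comp_add {C : ℝ} {g : ℝ → ℝ} (hg : IsBddMeas C g) (t : ℝ) :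
    IsBddMeas C fun u => g (t + u) :=
  ⟨hg.measurable.comp (measurable_const_add t), fun _ => hg.abs_le _⟩

theorem IsBddMeas.comp_sub {C : ℝ} {g : ℝ → ℝ} (hg : IsBddMeas C g) (t : ℝ) :
    IsBddMeas C fun u => g (t - u) :=
  ⟨hg.measurable.comp (measurable_const.sub measurable_id), fun _ => hg.abs_le _⟩

theorem IsBddMeas.sub_const {C : ℝ} {g : ℝ → ℝ} (hg : IsBddMeas C g) (h : ℝ) :
    IsBddMeas C fun u => g (u - h) :=
  ⟨hg.measurable.comp (measurable_id.sub_const h), fun _ => hg.abs_le _⟩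

section

variable {a C D : ℝ} {f g : ℝ → ℝ}

theorem IsBddMeas.integrableOn (hg : IsBddMeas C g) (ha : 0 < a) (s : ℝ) :
    IntegrableOn (fun u => Real.exp (-a * u) * g u) (Ioi s) :=
  (integrableOn_exp_mul_Ioi (neg_neg_of_pos ha) s).mul_bdd hg.measurable.aestronglyMeasurable
    (Eventually.of_forall hg.abs_le)

theorem expMean_mono (ha : 0 < a) (hf : IsBddMeas C f) (hg : IsBddMeas D g)
    (h : ∀ u > 0, f u ≤ g u) : expMean a f ≤ expMean a g :=
  setIntegral_mono_on (hf.integrableOn ha 0) (hg.integrableOn ha 0) measurableSet_Ioi fun u hu =>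
    mul_le_mul_of_nonneg_left (h u hu) (Real.exp_pos _).le

theorem expMean_congr (h : ∀ u > 0, f u = g u) : expMean a f = expMean a g :=
  setIntegral_congr_fun measurableSet_Ioi fun u hu => by simp only [h u hu]

theorem expMean_exp (ha : 0 < a) (A : ℝ) {r : ℝ} (hr : 0 ≤ r) :
    expMean a (fun u => A * Real.exp (-r * u)) = A / (a + r) := by
  have h1 : ∀ u : ℝ, Real.exp (-a * u) * (A * Real.exp (-r * u)) =
      A * Real.exp (-(a + r) * u) := fun u => by
    rw [show -(a + r) * u = -a * u + -r * u by ring, Real.exp_add]; ring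
  simp only [expMean, h1]
  rw [integral_const_mul, integral_exp_mul_Ioi (by linarith)]
  rw [mul_zero, Real.exp_zero, neg_div_neg_eq, mul_one_div]

theorem expMean_const (ha : 0 < a) (A : ℝ) : expMean a (fun _ => A) = A / a := by
  simpa using expMean_exp ha A le_rfl

theorem expMean_sub_mul (ha : 0 < a) (hf : IsBddMeas C f) (hg : IsBddMeas D g) (m : ℝ) :
    expMean a (fun u => f u - m * g u) = expMean a f - m * expMean a g := by
  unfold expMean
  rw [← integral_const_mul, ← integral_sub (hf.integrableOn ha 0)
    ((hg.integrableOn ha 0).const_mul m)]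
  congr 1; ext u; ring

theorem expMean_nonneg (h : ∀ u > 0, 0 ≤ g u) : 0 ≤ expMean a g :=
  setIntegral_nonneg measurableSet_Ioi fun u hu => mul_nonneg (Real.exp_pos _).le (h u hu)

theorem expMean_le (ha : 0 < a) (hg : IsBddMeas C g) : expMean a g ≤ C / a := by
  rw [← expMean_const ha]
  exact expMean_mono ha hg ⟨measurable_const, fun _ => le_rfl⟩ fun u _ => (le_abs_self _).trans
    (hg.abs_le u)

theorem integral_Ioi_comp_const_add (F : ℝ → ℝ) (s t : ℝ) :
    ∫ u in Ioi s, F (t + u) = ∫ u in Ioi (t + s), F u := by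
  have h := (measurePreserving_add_left volume t).setIntegral_preimage_emb
    (measurableEmbedding_addLeft t) F (Ioi (t + s))
  rw [← h]
  simp

/-- Writing the moving average `t ↦ ∫₀^∞ e^{-au} g(t+u) du` as a tail integral. -/
theorem expMean_comp_add (t : ℝ) :
    expMean a (fun u => g (t + u)) = Real.exp (a * t) * ∫ s in Ioi t, Real.exp (-a * s) * g s := by
  have h := integral_Ioi_comp_const_add (fun s => Real.exp (a * t) * (Real.exp (-a * s) * g s)) 0 t
  rw [add_zero] at h
  rw [← integral_const_mul, ← h, expMean]
  congr 1; ext u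
  rw [← mul_assoc, ← Real.exp_add]
  congr 2; ring

theorem exp_mul_expMean_shift_le (ha : 0 < a) (hg : IsBddMeas C g) (h0 : ∀ u, 0 ≤ g u) {s : ℝ}
    (hs : 0 ≤ s) : Real.exp (-a * s) * expMean a (fun u => g (s + u)) ≤ expMean a g := by
  rw [expMean_comp_add, ← mul_assoc, ← Real.exp_add]
  simp only [neg_mul, neg_add_cancel, Real.exp_zero, one_mul]
  unfold expMean
  simp only [neg_mul]
  have := hg.integrableOn ha 0
  simp only [neg_mul] at this
  exact setIntegral_mono_set this
    (Eventually.of_forall fun u => mul_nonneg (Real.exp_pos _).le (h0 u))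
    (Ioi_subset_Ioi hs).eventuallyLE

theorem hasDerivAt_expMean_add (ha : 0 < a) (hg : IsBddMeas C g) (hc : Continuous g) (t : ℝ) :
    HasDerivAt (fun t => expMean a fun u => g (t + u))
      (a * (expMean a fun u => g (t + u)) - g t) t := by
  set F : ℝ → ℝ := fun s => Real.exp (-a * s) * g s with hF
  have hFc : Continuous F := by fun_prop
  have h1 : ∀ t, ∫ s in Ioi t, F s = (∫ s in Ioi 0, F s) - ∫ s in (0 : ℝ)..t, F s := fun t => by
    rw [← intervalIntegral.integral_interval_add_Ioi (hg.integrableOn ha 0)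
      (hg.integrableOn ha t)]
    ring
  have h2 : HasDerivAt (fun t => ∫ s in Ioi t, F s) (-F t) t := by
    have h3 : HasDerivAt (fun t => ∫ s in (0 : ℝ)..t, F s) (F t) t :=
      intervalIntegral.integral_hasDerivAt_right (hFc.intervalIntegrable _ _)
        hFc.stronglyMeasurable.stronglyMeasurableAtFilter hFc.continuousAt
    exact (h3.const_sub _).congr_of_eventuallyEq (Eventually.of_forall h1)
  simp only [expMean_comp_add]
  refine (h2.exp_mul a).congr_deriv ?_
  have h4 : Real.exp (a * t) * F t = g t := by
    rw [hF]; dsimp only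
    rw [← mul_assoc, ← Real.exp_add]
    simp
  linear_combination -h4

theorem hasDerivAt_expMean_sub (ha : 0 < a) (hg : IsBddMeas C g) (hc : Continuous g) (t : ℝ) :
    HasDerivAt (fun t => expMean a fun u => g (t - u))
      (g t - a * (expMean a fun u => g (t - u))) t := by
  have h1 := hasDerivAt_expMean_add ha (g := fun s => g (-s))
    ⟨hg.measurable.comp measurable_neg, fun _ => hg.abs_le _⟩ (hc.comp continuous_neg) (-t)
  have h2 := h1.comp t (hasDerivAt_neg t)
  refine (h2.congr_deriv ?_).congr_of_eventuallyEq (Eventually.of_forall fun s => ?_)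
  · simp only [neg_add', neg_neg]; ring
  · simp only [Function.comp_apply, neg_add', neg_neg]

theorem tendsto_expMean (ha : 0 < a) {F : ℕ → ℝ → ℝ} (hF : ∀ n, IsBddMeas C (F n))
    (hlim : ∀ u, Tendsto (fun n => F n u) atTop (𝓝 (g u))) :
    Tendsto (fun n => expMean a (F n)) atTop (𝓝 (expMean a g)) := by
  refine tendsto_integral_of_dominated_convergence (fun u => Real.exp (-a * u) * C)
    (fun n => ((hF n).integrableOn ha 0).aestronglyMeasurable)
    ((integrableOn_exp_mul_Ioi (neg_neg_of_pos ha) 0).mul_const C)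
    (fun n => Eventually.of_forall fun u => ?_)
    (Eventually.of_forall fun u => (hlim u).const_mul _)
  rw [norm_mul, Real.norm_of_nonneg (Real.exp_pos _).le]
  exact mul_le_mul_of_nonneg_left ((hF n).abs_le u) (Real.exp_pos _).le

/-- Comparison for the moving average on a half-line. -/
theorem expMean_add_le (ha : 0 < a) (hg : IsBddMeas C g) (hc : Continuous g) {x x' : ℝ → ℝ}
    {T : ℝ} (hx : ∀ t ≤ T, HasDerivAt x (x' t) t) (hle : ∀ t ≤ T, g t ≤ a * x t - x' t)
    (hT : expMean a (fun u => g (T + u)) ≤ x T) {t : ℝ} (ht : t ≤ T) :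
    expMean a (fun u => g (t + u)) ≤ x t := by
  have h1 := antitoneOn_exp_mul (a := a) (convex_Iic T)
    (fun s hs => (hx s hs).sub (hasDerivAt_expMean_add ha hg hc s))
    (fun s hs => by have := hle s hs; simp only [Pi.sub_apply]; linarith)
  have h2 := h1 (show t ∈ Iic T from ht) self_mem_Iic ht
  have h3 := le_trans (mul_nonneg (Real.exp_pos (-a * T)).le (sub_nonneg.2 hT)) h2
  have := nonneg_of_mul_nonneg_right h3 (Real.exp_pos _)
  simpa using this

theorem le_expMean_add (ha : 0 < a) (hg : IsBddMeas C g) (hc : Continuous g) {x x' : ℝ → ℝ}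
    {T : ℝ} (hx : ∀ t ≤ T, HasDerivAt x (x' t) t) (hle : ∀ t ≤ T, a * x t - x' t ≤ g t)
    (hT : x T ≤ expMean a (fun u => g (T + u))) {t : ℝ} (ht : t ≤ T) :
    x t ≤ expMean a (fun u => g (t + u)) := by
  have h1 := antitoneOn_exp_mul (a := a) (convex_Iic T)
    (fun s hs => (hasDerivAt_expMean_add ha hg hc s).sub (hx s hs))
    (fun s hs => by have := hle s hs; simp only [Pi.sub_apply]; linarith)
  have h2 := h1 (show t ∈ Iic T from ht) self_mem_Iic ht
  have h3 := le_trans (mul_nonneg (Real.exp_pos (-a * T)).le (sub_nonneg.2 hT)) h2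
  have := nonneg_of_mul_nonneg_right h3 (Real.exp_pos _)
  simpa using this

end

end ExpMean

section Exponents

open Set Topology

theorem exists_growth_exponents {b c τ k z : ℝ} (hb0 : 0 ≤ b) (hb1 : b < 1) (hc : 0 < c)
    (hτ : 0 < τ) (hk0 : 0 < k) (hk1 : k < 1) (hz : 0 < z) (hchi : chi0 b c τ z = 0) :
    ∃ l m : ℝ, 0 < l ∧ l < m ∧ m ≤ 2 * l ∧
      (l ^ 2 - c * l) * (1 - b * Real.exp (-l * (c * τ))) + k = 0 ∧
      (m ^ 2 - c * m) * (1 - b * Real.exp (-m * (c * τ))) + k < 0 := by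
  set P : ℝ → ℝ := fun z => (z ^ 2 - c * z) * (1 - b * Real.exp (-z * (c * τ))) + k with hP
  have hPc : Continuous P := by fun_prop
  have hPz : P z < 0 := by
    have he : Real.exp (-(z * c * τ)) ≤ 1 := Real.exp_le_one_iff.2 (by
      have := mul_pos (mul_pos hz hc) hτ; linarith)
    have hd : 0 < 1 - b * Real.exp (-(z * c * τ)) := by nlinarith [Real.exp_pos (-(z * c * τ))]
    rw [chi0, div_eq_mul_inv, one_mul] at hchi
    have h1 : (z ^ 2 - c * z) * (1 - b * Real.exp (-(z * c * τ))) = -1 := by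
      rw [show z ^ 2 - c * z = -(1 - b * Real.exp (-(z * c * τ)))⁻¹ by linarith, neg_mul,
        inv_mul_cancel₀ hd.ne']
    rw [hP]; dsimp only
    rw [show -z * (c * τ) = -(z * c * τ) by ring, h1]
    linarith
  have hP0 : P 0 = k := by simp [hP]
  obtain ⟨l, ⟨hl, hPl⟩, hmax⟩ := (isCompact_Icc.inter_right (isClosed_singleton.preimage hPc) :
    IsCompact (Icc 0 z ∩ P ⁻¹' {0})).exists_isGreatest
    (by
      obtain ⟨x, hx, hx0⟩ := intermediate_value_Icc' hz.le hPc.continuousOn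
        (show (0 : ℝ) ∈ Icc _ _ from ⟨hPz.le, by rw [hP0]; exact hk0.le⟩)
      exact ⟨x, hx, hx0⟩)
  have hPl : P l = 0 := hPl
  have hl0 : 0 < l := lt_of_le_of_ne hl.1 (by rintro rfl; linarith)
  have hlz : l < z := lt_of_le_of_ne hl.2 (by rintro rfl; linarith)
  refine ⟨l, min (2 * l) z, hl0, lt_min (by linarith) hlz, min_le_left _ _, hPl, ?_⟩
  by_contra! hge
  obtain ⟨x, hx, hx0⟩ := intermediate_value_Icc' (min_le_right (2 * l) z) hPc.continuousOn
    (show (0 : ℝ) ∈ Icc _ _ from ⟨hPz.le, hge⟩)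
  have hlx : l < x := (lt_min (by linarith) hlz).trans_le hx.1
  exact absurd (hmax ⟨⟨hl0.le.trans hlx.le, hx.2⟩, hx0⟩) (not_le.2 hlx)

theorem exists_decay_exponent {b c τ k z : ℝ} (hc : 0 < c) (hk0 : 0 < k) (hk1 : k < 1)
    (hz : z < 0) (hchi : chi1 b c τ z = 0) :
    ∃ s : ℝ, 0 < s ∧ s ≤ -z ∧ (s ^ 2 + c * s) * (Real.exp (-s * (c * τ)) - b) = k := by
  set Q : ℝ → ℝ := fun s => (s ^ 2 + c * s) * (Real.exp (-s * (c * τ)) - b) with hQ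
  have hQc : Continuous Q := by fun_prop
  have hQz : Q (-z) = 1 := by
    have hpos : 0 < z ^ 2 - c * z := by nlinarith
    rw [chi1] at hchi
    have hd : 1 - b * Real.exp (-(z * c * τ)) ≠ 0 := by
      intro h0
      rw [h0, div_zero] at hchi
      linarith
    rw [sub_eq_zero, eq_div_iff hd] at hchi
    have he : Real.exp (- -z * (c * τ)) * Real.exp (-(z * c * τ)) = 1 := by
      rw [← Real.exp_add, ← Real.exp_zero]; congr 1; ring
    refine mul_right_cancel₀ (Real.exp_ne_zero (-(z * c * τ))) ?_
    rw [hQ]; dsimp only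
    linear_combination hchi + (z ^ 2 - c * z) * he
  have hQ0 : Q 0 = 0 := by simp [hQ]
  obtain ⟨s, hs, hs0⟩ := intermediate_value_Icc (show 0 ≤ -z by linarith) hQc.continuousOn
    (show k ∈ Icc _ _ from ⟨by rw [hQ0]; exact hk0.le, by rw [hQz]; exact hk1.le⟩)
  refine ⟨s, lt_of_le_of_ne hs.1 ?_, hs.2, hs0⟩
  rintro rfl
  linarith

end Exponents

section FrontStep

open Set Topology MeasureTheory

/-- The solution `φ` of `φ' + s φ = η` which is bounded at `-∞`. -/
noncomputable def pastMean (s : ℝ) (η : ℝ → ℝ) (t : ℝ) : ℝ := expMean s fun u => η (t - u)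

/-- The source term of the profile equation, written in terms of `η = φ' + s φ`. -/
noncomputable def frontSource (b c h k s : ℝ) (η : ℝ → ℝ) (t : ℝ) : ℝ :=
  (s ^ 2 + c * s) * (pastMean s η t - b * pastMean s η (t - h)) +
    k * (pastMean s η t * (1 - pastMean s η (t - h)))

/-- The fixed-point operator whose fixed points `η` yield the profiles `pastMean s η`. -/
noncomputable def frontStep (b c h k s : ℝ) (η : ℝ → ℝ) (t : ℝ) : ℝ :=
  b * η (t - h) + expMean (c + s) fun u => frontSource b c h k s η (t + u)

/-- Measurable functions with values in `[0, s]`. -/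
structure IsDensity (s : ℝ) (η : ℝ → ℝ) : Prop where
  measurable : Measurable η
  nonneg : ∀ t, 0 ≤ η t
  le : ∀ t, η t ≤ s

namespace IsDensity

variable {s : ℝ} {η ξ : ℝ → ℝ}

theorem isBddMeas (hη : IsDensity s η) : IsBddMeas s η :=
  ⟨hη.measurable, fun t => by rw [abs_of_nonneg (hη.nonneg t)]; exact hη.le t⟩

theorem sub (hη : IsDensity s η) (hξ : IsDensity s ξ) (h : ∀ t, η t ≤ ξ t) :
    IsDensity s fun t => ξ t - η t :=
  ⟨hξ.measurable.sub hη.measurable, fun t => sub_nonneg.2 (h t),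
    fun t => by linarith [hξ.le t, hη.nonneg t]⟩

theorem const {s a : ℝ} (h0 : 0 ≤ a) (h1 : a ≤ s) : IsDensity s fun _ => a :=
  ⟨measurable_const, fun _ => h0, fun _ => h1⟩

theorem pastMean_nonneg (hη : IsDensity s η) (t : ℝ) : 0 ≤ pastMean s η t :=
  expMean_nonneg fun _ _ => hη.nonneg _

theorem pastMean_le_one (hη : IsDensity s η) (hs : 0 < s) (t : ℝ) : pastMean s η t ≤ 1 := by
  have := expMean_le hs (hη.isBddMeas.comp_sub t)
  rwa [div_self hs.ne'] at this

theorem pastMean_sub (hη : IsDensity s η) (hξ : IsDensity s ξ) (hs : 0 < s) (t : ℝ) :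
    pastMean s (fun t => ξ t - η t) t = pastMean s ξ t - pastMean s η t := by
  simpa [pastMean] using expMean_sub_mul hs (hξ.isBddMeas.comp_sub t) (hη.isBddMeas.comp_sub t) 1

theorem exp_mul_pastMean_le (hη : IsDensity s η) (hs : 0 < s) {r : ℝ} (hr : 0 ≤ r) (t : ℝ) :
    Real.exp (-s * r) * pastMean s η (t - r) ≤ pastMean s η t := by
  have := exp_mul_expMean_shift_le hs (hη.isBddMeas.comp_sub t) (fun u => hη.nonneg _) hr
  simpa only [pastMean, sub_sub] using this

theorem pastMean_const (hs : 0 < s) (a t : ℝ) : pastMean s (fun _ => a) t = a / s :=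
  expMean_const hs a

theorem pastMean_lipschitz (hη : IsDensity s η) (hs : 0 < s) {t r : ℝ} (hr : r ≤ t) :
    |pastMean s η t - pastMean s η r| ≤ s * (t - r) := by
  have h0 := hη.exp_mul_pastMean_le hs (sub_nonneg.2 hr) t
  have h1 := (hη.sub (const hs.le le_rfl) hη.le).exp_mul_pastMean_le hs (sub_nonneg.2 hr) t
  simp only [hη.pastMean_sub (const hs.le le_rfl) hs, pastMean_const hs, div_self hs.ne',
    sub_sub_cancel] at h0 h1
  have h2 := Real.add_one_le_exp (-s * (t - r))
  have h3 : Real.exp (-s * (t - r)) ≤ 1 := Real.exp_le_one_iff.2 (by nlinarith)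
  have h4 := hη.pastMean_nonneg r
  have h5 := hη.pastMean_le_one hs r
  rw [abs_le]
  constructor <;> nlinarith

theorem abs_pastMean_sub_le (hη : IsDensity s η) (hs : 0 < s) (t r : ℝ) :
    |pastMean s η t - pastMean s η r| ≤ s * |t - r| := by
  rcases le_total r t with h | h
  · rw [abs_of_nonneg (sub_nonneg.2 h)]; exact hη.pastMean_lipschitz hs h
  · rw [abs_sub_comm, abs_sub_comm t, abs_of_nonneg (sub_nonneg.2 h)]
    exact hη.pastMean_lipschitz hs h

theorem continuous_pastMean (hη : IsDensity s η) (hs : 0 < s) : Continuous (pastMean s η) := by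
  refine (LipschitzWith.of_dist_le_mul (K := ⟨s, hs.le⟩) fun t r => ?_).continuous
  exact hη.abs_pastMean_sub_le hs t r

theorem pastMean_mono (hη : IsDensity s η) (hξ : IsDensity s ξ) (hs : 0 < s)
    (h : ∀ t, η t ≤ ξ t) (t : ℝ) : pastMean s η t ≤ pastMean s ξ t :=
  expMean_mono hs (hη.isBddMeas.comp_sub t) (hξ.isBddMeas.comp_sub t) fun _ _ => h _

theorem comp_add (hη : IsDensity s η) (r : ℝ) : IsDensity s fun t => η (t + r) :=
  ⟨hη.measurable.comp (measurable_id.add_const r), fun _ => hη.nonneg _, fun _ => hη.le _⟩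

end IsDensity

theorem pastMean_comp_add (s : ℝ) (η : ℝ → ℝ) (r t : ℝ) :
    pastMean s (fun t => η (t + r)) t = pastMean s η (t + r) := by
  simp only [pastMean, sub_add_eq_add_sub]

theorem frontSource_comp_add (b c h k s : ℝ) (η : ℝ → ℝ) (r t : ℝ) :
    frontSource b c h k s (fun t => η (t + r)) t = frontSource b c h k s η (t + r) := by
  simp only [frontSource, pastMean_comp_add, sub_add_eq_add_sub]

theorem frontStep_comp_add (b c h k s : ℝ) (η : ℝ → ℝ) (r t : ℝ) :
    frontStep b c h k s (fun t => η (t + r)) t = frontStep b c h k s η (t + r) := by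
  simp only [frontStep, frontSource_comp_add, sub_add_eq_add_sub, add_right_comm]

/-- The parameter relations under which `frontStep` is monotone: `-s` is a root of the
characteristic function at the upper equilibrium. -/
structure IsDecayRate (b c h k s : ℝ) : Prop where
  b_nonneg : 0 ≤ b
  b_lt_one : b < 1
  c_pos : 0 < c
  h_pos : 0 < h
  k_pos : 0 < k
  s_pos : 0 < s
  char_eq : (s ^ 2 + c * s) * (Real.exp (-s * h) - b) = k

namespace IsDecayRate

variable {b c h k s : ℝ} {η ξ : ℝ → ℝ}

theorem q_pos (H : IsDecayRate b c h k s) : 0 < s ^ 2 + c * s := by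
  have := H.c_pos; have := H.s_pos; positivity

theorem continuous_source (H : IsDecayRate b c h k s) (hη : IsDensity s η) :
    Continuous (frontSource b c h k s η) := by
  have := hη.continuous_pastMean H.s_pos
  unfold frontSource
  fun_prop

theorem source_mono (H : IsDecayRate b c h k s) (hη : IsDensity s η) (hξ : IsDensity s ξ)
    (hle : ∀ t, η t ≤ ξ t) (t : ℝ) : frontSource b c h k s η t ≤ frontSource b c h k s ξ t := by
  have h1 := (hη.sub hξ hle).exp_mul_pastMean_le H.s_pos H.h_pos.le t
  rw [hη.pastMean_sub hξ H.s_pos, hη.pastMean_sub hξ H.s_pos] at h1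
  have h2 := mul_le_mul_of_nonneg_left h1 H.q_pos.le
  have hm := hη.pastMean_mono hξ H.s_pos hle
  have ha := hη.pastMean_le_one H.s_pos (t - h)
  have hd := hξ.pastMean_le_one H.s_pos t
  have h3 := mul_nonneg H.k_pos.le (mul_nonneg (sub_nonneg.2 (hm t)) (sub_nonneg.2 ha))
  have h4 := mul_nonneg H.k_pos.le (mul_nonneg (sub_nonneg.2 (hm (t - h))) (sub_nonneg.2 hd))
  unfold frontSource
  have hq : (s ^ 2 + c * s) * Real.exp (-s * h) = k + (s ^ 2 + c * s) * b := by
    linarith [H.char_eq]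
  rw [← mul_assoc, hq] at h2
  linarith

theorem source_zero (H : IsDecayRate b c h k s) (t : ℝ) :
    frontSource b c h k s (fun _ => 0) t = 0 := by
  simp [frontSource, IsDensity.pastMean_const H.s_pos]

theorem source_const (H : IsDecayRate b c h k s) (t : ℝ) :
    frontSource b c h k s (fun _ => s) t = (s ^ 2 + c * s) * (1 - b) := by
  simp [frontSource, IsDensity.pastMean_const H.s_pos, div_self H.s_pos.ne']

theorem source_nonneg (H : IsDecayRate b c h k s) (hη : IsDensity s η) (t : ℝ) :
    0 ≤ frontSource b c h k s η t := by
  have := H.source_mono (IsDensity.const le_rfl H.s_pos.le) hη hη.nonneg t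
  rwa [H.source_zero] at this

theorem source_isBddMeas (H : IsDecayRate b c h k s) (hη : IsDensity s η) :
    IsBddMeas ((s ^ 2 + c * s) * (1 - b)) (frontSource b c h k s η) := by
  refine ⟨(H.continuous_source hη).measurable, fun t => ?_⟩
  rw [abs_of_nonneg (H.source_nonneg hη t), ← H.source_const t]
  exact H.source_mono hη (IsDensity.const H.s_pos.le le_rfl) hη.le t

theorem add_pos (H : IsDecayRate b c h k s) : 0 < c + s := _root_.add_pos H.c_pos H.s_pos

theorem step_mono (H : IsDecayRate b c h k s) (hη : IsDensity s η) (hξ : IsDensity s ξ)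
    (hle : ∀ t, η t ≤ ξ t) (t : ℝ) : frontStep b c h k s η t ≤ frontStep b c h k s ξ t :=
  add_le_add (mul_le_mul_of_nonneg_left (hle _) H.b_nonneg)
    (expMean_mono H.add_pos ((H.source_isBddMeas hη).comp_add t)
      ((H.source_isBddMeas hξ).comp_add t) fun _ _ => H.source_mono hη hξ hle _)

theorem step_nonneg (H : IsDecayRate b c h k s) (hη : IsDensity s η) (t : ℝ) :
    0 ≤ frontStep b c h k s η t :=
  add_nonneg (mul_nonneg H.b_nonneg (hη.nonneg _)) (expMean_nonneg fun _ _ => H.source_nonneg hη _)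

theorem step_const (H : IsDecayRate b c h k s) (t : ℝ) :
    frontStep b c h k s (fun _ => s) t = s := by
  simp only [frontStep, H.source_const, expMean_const H.add_pos]
  have := H.add_pos
  field_simp
  ring

theorem step_le (H : IsDecayRate b c h k s) (hη : IsDensity s η) (t : ℝ) :
    frontStep b c h k s η t ≤ s := by
  have := H.step_mono hη (IsDensity.const H.s_pos.le le_rfl) hη.le t
  rwa [H.step_const] at this

theorem continuous_expMean_source (H : IsDecayRate b c h k s) (hη : IsDensity s η) :
    Continuous fun t => expMean (c + s) fun u => frontSource b c h k s η (t + u) :=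
  continuous_iff_continuousAt.2 fun t => (hasDerivAt_expMean_add H.add_pos
    (H.source_isBddMeas hη) (H.continuous_source hη) t).continuousAt

theorem isDensity_step (H : IsDecayRate b c h k s) (hη : IsDensity s η) :
    IsDensity s (frontStep b c h k s η) :=
  ⟨((hη.measurable.comp (measurable_id.sub_const h)).const_mul b).add
    (H.continuous_expMean_source hη).measurable, H.step_nonneg hη, H.step_le hη⟩

theorem monotone_step (H : IsDecayRate b c h k s) (hη : IsDensity s η) (hm : Monotone η) :
    Monotone (frontStep b c h k s η) := by
  intro t r htr
  have := H.step_mono hη (hη.comp_add (r - t)) (fun x => hm (by linarith)) t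
  rwa [frontStep_comp_add, add_sub_cancel] at this

theorem tendsto_step (H : IsDecayRate b c h k s) {F : ℕ → ℝ → ℝ} (hF : ∀ n, IsDensity s (F n))
    (hlim : ∀ t, Tendsto (fun n => F n t) atTop (𝓝 (η t))) (t : ℝ) :
    Tendsto (fun n => frontStep b c h k s (F n) t) atTop (𝓝 (frontStep b c h k s η t)) := by
  have h1 : ∀ t, Tendsto (fun n => pastMean s (F n) t) atTop (𝓝 (pastMean s η t)) := fun t =>
    tendsto_expMean H.s_pos (fun n => (hF n).isBddMeas.comp_sub t) fun u => hlim _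
  have h2 : ∀ t, Tendsto (fun n => frontSource b c h k s (F n) t) atTop
      (𝓝 (frontSource b c h k s η t)) := fun t =>
    (((h1 t).sub ((h1 (t - h)).const_mul b)).const_mul _).add
      (((h1 t).mul ((h1 (t - h)).const_sub 1)).const_mul k)
  exact ((hlim _).const_mul b).add
    (tendsto_expMean H.add_pos (fun n => (H.source_isBddMeas (hF n)).comp_add t) fun u => h2 _)

/-- A monotone fixed point of `frontStep` yields a profile. -/
theorem isProfile_of_step_eq (H : IsDecayRate b c h k s) (hη : IsDensity s η) (hm : Monotone η)
    (hfix : ∀ t, frontStep b c h k s η t = η t) :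
    IsProfile b c h k (pastMean s η) (fun t => η t - b * η (t - h)
      - s * (pastMean s η t - b * pastMean s η (t - h))) := by
  have hx : (fun t => η t - b * η (t - h)) =
      fun t => expMean (c + s) fun u => frontSource b c h k s η (t + u) := by
    funext t
    rw [sub_eq_iff_eq_add', ← hfix t]
    rfl
  have hxd : ∀ t, HasDerivAt (fun t => η t - b * η (t - h))
      ((c + s) * (η t - b * η (t - h)) - frontSource b c h k s η t) t := fun t => by
    rw [congrFun hx t, hx]
    exact hasDerivAt_expMean_add H.add_pos (H.source_isBddMeas hη) (H.continuous_source hη) t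
  have hv : (fun t => pastMean s η t - b * pastMean s η (t - h)) =
      fun t => expMean s fun u => (fun t => η t - b * η (t - h)) (t - u) := by
    funext t
    have := expMean_sub_mul H.s_pos (hη.isBddMeas.comp_sub t) (hη.isBddMeas.comp_sub (t - h)) b
    simp only [pastMean, sub_right_comm t h] at this ⊢
    exact this.symm
  have hvd : ∀ t, HasDerivAt (fun t => pastMean s η t - b * pastMean s η (t - h))
      (η t - b * η (t - h) - s * (pastMean s η t - b * pastMean s η (t - h))) t := fun t => by
    rw [congrFun hv t, hv]
    refine hasDerivAt_expMean_sub (C := s + b * s) (g := fun t => η t - b * η (t - h)) H.s_pos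
      ⟨hη.measurable.sub ((hη.measurable.comp (measurable_id.sub_const h)).const_mul b),
        fun t => ?_⟩ (by rw [hx]; exact H.continuous_expMean_source hη) t
    have h1 := mul_nonneg H.b_nonneg (hη.nonneg (t - h))
    have h2 := mul_le_mul_of_nonneg_left (hη.le (t - h)) H.b_nonneg
    have h3 := mul_nonneg H.b_nonneg H.s_pos.le
    rw [abs_le]
    constructor <;> linarith [hη.nonneg t, hη.le t, H.s_pos]
  refine ⟨?_, hη.pastMean_nonneg, hη.pastMean_le_one H.s_pos, hvd, fun t => ?_⟩
  · intro t r htr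
    exact expMean_mono H.s_pos (hη.isBddMeas.comp_sub t) (hη.isBddMeas.comp_sub r)
      fun u _ => hm (by linarith)
  · refine ((hxd t).sub ((hvd t).const_mul s)).congr_deriv ?_
    unfold frontSource
    ring

end IsDecayRate

end FrontStep

section SubSupersolutions

open Set Topology MeasureTheory

theorem expMean_exp_sub_exp {a r m : ℝ} (ha : 0 < a) (hr : 0 < r) (hm : 0 < m) (A B : ℝ) :
    expMean a (fun u => A * Real.exp (-r * u) - B * Real.exp (-m * u)) =
      A / (a + r) - B / (a + m) := by
  have hI : ∀ (A : ℝ) {r : ℝ}, 0 < r →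
      IntegrableOn (fun u => Real.exp (-a * u) * (A * Real.exp (-r * u))) (Ioi 0) := by
    intro A r hr
    have h1 := (integrableOn_exp_mul_Ioi (show -(a + r) < 0 by linarith) 0).const_mul A
    refine IntegrableOn.congr_fun h1 (fun u _ => ?_) measurableSet_Ioi
    rw [show -(a + r) * u = -a * u + -r * u by ring, Real.exp_add]
    ring
  rw [← expMean_exp ha A hr.le, ← expMean_exp ha B hm.le]
  unfold expMean
  rw [← integral_sub (hI A hr) (hI B hm)]
  congr 1; ext u; ring

theorem pastMean_exp_sub_exp {s l m A B T : ℝ} {η : ℝ → ℝ} (hs : 0 < s) (hl : 0 < l)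
    (hm : 0 < m) (hη : ∀ t ≤ T, η t = A * Real.exp (l * t) - B * Real.exp (m * t)) {t : ℝ}
    (ht : t ≤ T) :
    pastMean s η t = A * Real.exp (l * t) / (s + l) - B * Real.exp (m * t) / (s + m) := by
  rw [pastMean, ← expMean_exp_sub_exp hs hl hm]
  refine expMean_congr fun u hu => ?_
  rw [hη _ (by linarith), mul_assoc, mul_assoc, ← Real.exp_add, ← Real.exp_add]
  ring_nf

theorem hasDerivAt_mul_exp (A l t : ℝ) :
    HasDerivAt (fun t => A * Real.exp (l * t)) (A * (l * Real.exp (l * t))) t := by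
  have := ((hasDerivAt_id t).const_mul l).exp.const_mul A
  simpa [mul_comm] using this

namespace IsDecayRate

variable {b c h k s l m N T : ℝ} {η : ℝ → ℝ}

theorem source_sub_residual (H : IsDecayRate b c h k s) (hl : 0 < l) (hm : 0 < m)
    (hPl : (l ^ 2 - c * l) * (1 - b * Real.exp (-l * h)) + k = 0)
    (hη : ∀ t ≤ T, η t = s * Real.exp (l * t) - N * Real.exp (m * t)) {t : ℝ} (ht : t ≤ T) :
    frontSource b c h k s η t =
      (c + s) * (s * (1 - b * Real.exp (-l * h)) * Real.exp (l * t) -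
          N * (1 - b * Real.exp (-m * h)) * Real.exp (m * t)) -
        (s * (1 - b * Real.exp (-l * h)) * (l * Real.exp (l * t)) -
          N * (1 - b * Real.exp (-m * h)) * (m * Real.exp (m * t))) -
        N / (s + m) * ((m ^ 2 - c * m) * (1 - b * Real.exp (-m * h)) + k) * Real.exp (m * t) -
        k * (pastMean s η t * pastMean s η (t - h)) := by
  have hlt : Real.exp (l * (t - h)) = Real.exp (l * t) * Real.exp (-l * h) := by
    rw [← Real.exp_add]; congr 1; ring
  have hmt : Real.exp (m * (t - h)) = Real.exp (m * t) * Real.exp (-m * h) := by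
    rw [← Real.exp_add]; congr 1; ring
  have h1 := pastMean_exp_sub_exp H.s_pos hl hm hη ht
  have h2 := pastMean_exp_sub_exp H.s_pos hl hm hη (show t - h ≤ T by linarith [H.h_pos])
  rw [hlt, hmt] at h2
  have h3 : frontSource b c h k s η t = (s ^ 2 + c * s) * (pastMean s η t -
      b * pastMean s η (t - h)) + k * pastMean s η t - k * (pastMean s η t * pastMean s η (t - h)) := by
    unfold frontSource; ring
  rw [h3]
  congr 1
  rw [h1, h2]
  have := H.s_pos
  have hsl : s + l ≠ 0 := by positivity
  have hsm : s + m ≠ 0 := by positivity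
  generalize Real.exp (l * t) = x at *
  generalize Real.exp (m * t) = y at *
  generalize Real.exp (-l * h) = p at *
  generalize Real.exp (-m * h) = r at *
  obtain rfl : k = -((l ^ 2 - c * l) * (1 - b * p)) := by linarith
  field_simp
  ring

/-- The supersolution `s e^{l min(t,0)}`. -/
theorem step_upper_le (H : IsDecayRate b c h k s) (hl : 0 < l)
    (hPl : (l ^ 2 - c * l) * (1 - b * Real.exp (-l * h)) + k = 0)
    (hη : IsDensity s fun t => s * Real.exp (l * min t 0)) (t : ℝ) :
    frontStep b c h k s (fun t => s * Real.exp (l * min t 0)) t ≤ s * Real.exp (l * min t 0) := by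
  rcases le_total 0 t with ht | ht
  · rw [min_eq_right ht, mul_zero, Real.exp_zero, mul_one]
    exact H.step_le hη t
  set η : ℝ → ℝ := fun t => s * Real.exp (l * min t 0) with hηd
  have hform : ∀ t ≤ 0, η t = s * Real.exp (l * t) - 0 * Real.exp (l * t) := fun t ht => by
    simp [hηd, ht]
  have hshift : ∀ t ≤ 0, b * η (t - h) =
      s * Real.exp (l * t) - s * (1 - b * Real.exp (-l * h)) * Real.exp (l * t) := fun t ht => by
    rw [hform _ (by linarith [H.h_pos]), show l * (t - h) = l * t + -l * h by ring, Real.exp_add]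
    ring
  have key := expMean_add_le H.add_pos (H.source_isBddMeas hη) (H.continuous_source hη) (T := 0)
    (fun t _ => hasDerivAt_mul_exp (s * (1 - b * Real.exp (-l * h))) l t) (fun t ht => by
      rw [H.source_sub_residual hl hl hPl hform ht]
      have := mul_nonneg H.k_pos.le
        (mul_nonneg (hη.pastMean_nonneg t) (hη.pastMean_nonneg (t - h)))
      simp only [zero_mul, zero_div, sub_zero]
      linarith)
    (by
      have h1 := H.step_le hη 0
      have h2 := hshift 0 le_rfl
      rw [mul_zero, Real.exp_zero] at h2 ⊢
      unfold frontStep at h1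
      linarith) ht
  have h1 := hshift t ht
  rw [hηd] at h1 key ⊢
  rw [frontStep, h1, min_eq_left ht]
  linarith

/-- The subsolution `max(0, s e^{lt} - N e^{mt})`. -/
theorem lower_le_step (H : IsDecayRate b c h k s) (hl : 0 < l) (hlm : l < m) (hml : m ≤ 2 * l)
    (hPl : (l ^ 2 - c * l) * (1 - b * Real.exp (-l * h)) + k = 0)
    (hN : s ≤ N)
    (hPm : k * (s / (s + l)) ^ 2 ≤
      -(N / (s + m) * ((m ^ 2 - c * m) * (1 - b * Real.exp (-m * h)) + k)))
    (hη : IsDensity s fun t => max 0 (s * Real.exp (l * t) - N * Real.exp (m * t)))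
    (hT0 : T ≤ 0) (hT : ∀ t ≤ T, N * Real.exp (m * t) ≤ s * Real.exp (l * t))
    (hT' : ∀ t ≥ T, s * Real.exp (l * t) ≤ N * Real.exp (m * t)) (t : ℝ) :
    max 0 (s * Real.exp (l * t) - N * Real.exp (m * t)) ≤
      frontStep b c h k s (fun t => max 0 (s * Real.exp (l * t) - N * Real.exp (m * t))) t := by
  rcases le_total T t with ht | ht
  · rw [max_eq_left (by linarith [hT' t ht])]
    exact H.step_nonneg hη t
  have hm : 0 < m := hl.trans hlm
  set η : ℝ → ℝ := fun t => max 0 (s * Real.exp (l * t) - N * Real.exp (m * t)) with hηd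
  have hform : ∀ t ≤ T, η t = s * Real.exp (l * t) - N * Real.exp (m * t) := fun t ht =>
    max_eq_right (by linarith [hT t ht])
  have hshift : ∀ t ≤ T, b * η (t - h) = s * Real.exp (l * t) - N * Real.exp (m * t) -
      (s * (1 - b * Real.exp (-l * h)) * Real.exp (l * t) -
        N * (1 - b * Real.exp (-m * h)) * Real.exp (m * t)) := fun t ht => by
    rw [hform _ (by linarith [H.h_pos]), show l * (t - h) = l * t + -l * h by ring,
      show m * (t - h) = m * t + -m * h by ring, Real.exp_add, Real.exp_add]
    ring
  have hphi : ∀ t ≤ T, pastMean s η t ≤ s / (s + l) * Real.exp (l * t) := fun t ht => by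
    rw [pastMean_exp_sub_exp H.s_pos hl hm hform ht]
    have : 0 ≤ N * Real.exp (m * t) / (s + m) :=
      div_nonneg (mul_nonneg (H.s_pos.le.trans hN) (Real.exp_pos _).le) (by linarith [H.s_pos])
    rw [div_mul_eq_mul_div]
    linarith
  have key := le_expMean_add H.add_pos (H.source_isBddMeas hη) (H.continuous_source hη) (T := T)
    (fun t _ => (hasDerivAt_mul_exp (s * (1 - b * Real.exp (-l * h))) l t).sub
      (hasDerivAt_mul_exp (N * (1 - b * Real.exp (-m * h))) m t)) (fun t ht => by
      rw [H.source_sub_residual hl hm hPl hform ht]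
      have hA : 0 < s / (s + l) := div_pos H.s_pos (by linarith [H.s_pos])
      have h1 : pastMean s η (t - h) ≤ s / (s + l) * Real.exp (l * t) := by
        refine (hphi _ (by linarith [H.h_pos])).trans (mul_le_mul_of_nonneg_left ?_ hA.le)
        exact Real.exp_le_exp.2 (by nlinarith [H.h_pos])
      have h2 := mul_le_mul (hphi t ht) h1 (hη.pastMean_nonneg _)
        (mul_nonneg hA.le (Real.exp_pos _).le)
      have h3 : Real.exp (l * t) * Real.exp (l * t) ≤ Real.exp (m * t) := by
        rw [← Real.exp_add]
        exact Real.exp_le_exp.2 (by nlinarith)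
      have h4 := mul_le_mul_of_nonneg_left h3 (mul_nonneg H.k_pos.le (sq_nonneg (s / (s + l))))
      have h5 := mul_le_mul_of_nonneg_right hPm (Real.exp_pos (m * t)).le
      have h6 := mul_le_mul_of_nonneg_left h2 H.k_pos.le
      simp only [Pi.sub_apply]
      linarith)
    (by
      have h1 := H.step_nonneg hη T
      have h2 := hshift T le_rfl
      have h3 := hT T le_rfl
      have h4 := hT' T le_rfl
      unfold frontStep at h1
      simp only [Pi.sub_apply]
      linarith) ht
  have h1 := hshift t ht
  have h2 := hform t ht
  simp only [Pi.sub_apply] at key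
  change η t ≤ _
  rw [frontStep, h1, h2]
  linarith

end IsDecayRate

end SubSupersolutions

section Iteration

open Set Topology MeasureTheory

namespace IsDecayRate

variable {b c h k s : ℝ} {η ξ : ℝ → ℝ}

/-- Monotone iteration: between an ordered pair of a sub- and a supersolution, the latter
nondecreasing, there is a nondecreasing fixed point. -/
theorem exists_step_eq (H : IsDecayRate b c h k s) (hη : IsDensity s η) (hξ : IsDensity s ξ)
    (hle : ∀ t, η t ≤ ξ t) (hm : Monotone ξ) (hsub : ∀ t, η t ≤ frontStep b c h k s η t)
    (hsup : ∀ t, frontStep b c h k s ξ t ≤ ξ t) :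
    ∃ ζ, IsDensity s ζ ∧ Monotone ζ ∧ (∀ t, frontStep b c h k s ζ t = ζ t) ∧
      (∀ t, η t ≤ ζ t) ∧ ∀ t, ζ t ≤ ξ t := by
  set F : ℕ → ℝ → ℝ := fun n => (frontStep b c h k s)^[n] ξ with hF
  have hsucc : ∀ n, F (n + 1) = frontStep b c h k s (F n) := fun n =>
    Function.iterate_succ_apply' _ _ _
  have hd : ∀ n, IsDensity s (F n) := by
    intro n
    induction n with
    | zero => exact hξ
    | succ n ih => rw [hsucc]; exact H.isDensity_step ih
  have hmono : ∀ n, Monotone (F n) := by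
    intro n
    induction n with
    | zero => exact hm
    | succ n ih => rw [hsucc]; exact H.monotone_step (hd n) ih
  have hlow : ∀ n t, η t ≤ F n t := by
    intro n
    induction n with
    | zero => exact hle
    | succ n ih =>
      intro t
      rw [hsucc]
      exact (hsub t).trans (H.step_mono hη (hd n) ih t)
  have hdec : ∀ n t, F (n + 1) t ≤ F n t := by
    intro n
    induction n with
    | zero => exact hsup
    | succ n ih =>
      intro t
      rw [hsucc, hsucc n]
      have := H.step_mono (hd (n + 1)) (hd n) ih t
      rwa [hsucc n] at this
  have hanti : ∀ t, Antitone fun n => F n t := fun t => antitone_nat_of_succ_le fun n => hdec n t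
  have hbdd : ∀ t, BddBelow (range fun n => F n t) := fun t =>
    ⟨η t, by rintro _ ⟨n, rfl⟩; exact hlow n t⟩
  have hlim : ∀ t, Tendsto (fun n => F n t) atTop (𝓝 (⨅ n, F n t)) := fun t =>
    tendsto_atTop_ciInf (hanti t) (hbdd t)
  have hζm : Monotone fun t => ⨅ n, F n t := fun t r htr =>
    ciInf_mono (hbdd t) fun n => hmono n htr
  refine ⟨fun t => ⨅ n, F n t, ⟨hζm.measurable, fun t => le_ciInf fun n => (hd n).nonneg t,
    fun t => (ciInf_le (hbdd t) 0).trans ((hd 0).le t)⟩, hζm, fun t => ?_,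
    fun t => le_ciInf fun n => hlow n t, fun t => ciInf_le (hbdd t) 0⟩
  refine tendsto_nhds_unique (H.tendsto_step hd hlim t) ?_
  simp only [← hsucc]
  exact (tendsto_add_atTop_iff_nat 1).2 (hlim t)

/-- Profiles exist whenever both linearisations have strictly admissible exponents. -/
theorem exists_profile {l m : ℝ} (H : IsDecayRate b c h k s) (hl : 0 < l) (hlm : l < m)
    (hml : m ≤ 2 * l) (hPl : (l ^ 2 - c * l) * (1 - b * Real.exp (-l * h)) + k = 0)
    (hPm : (m ^ 2 - c * m) * (1 - b * Real.exp (-m * h)) + k < 0) :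
    ∃ φ p, IsProfile b c h k φ p ∧ (∀ t r, |φ t - φ r| ≤ s * |t - r|) ∧
      ∃ t, 0 < φ t ∧ φ t < 1 := by
  have hs := H.s_pos
  have hm : 0 < m := hl.trans hlm
  set P := (m ^ 2 - c * m) * (1 - b * Real.exp (-m * h)) + k with hP
  set N := (s + m) * (1 + k * (s / (s + l)) ^ 2 / (-P)) with hN
  have hB : 0 ≤ k * (s / (s + l)) ^ 2 / (-P) :=
    div_nonneg (mul_nonneg H.k_pos.le (sq_nonneg _)) (by linarith)
  have hNs : s ≤ N := by nlinarith
  have hN0 : 0 < N := hs.trans_le hNs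
  set T := Real.log (s / N) / (m - l) with hTd
  have hml' : 0 < m - l := sub_pos.2 hlm
  have hTe : N * Real.exp ((m - l) * T) = s := by
    rw [hTd, mul_div_cancel₀ _ hml'.ne', Real.exp_log (div_pos hs hN0), mul_div_cancel₀ _ hN0.ne']
  have hsplit : ∀ t, N * Real.exp (m * t) = N * Real.exp ((m - l) * t) * Real.exp (l * t) := by
    intro t
    rw [mul_assoc N, ← Real.exp_add, ← add_mul, sub_add_cancel]
  have hT0 : T ≤ 0 :=
    div_nonpos_of_nonpos_of_nonneg (Real.log_nonpos (div_pos hs hN0).le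
      ((div_le_one hN0).2 hNs)) hml'.le
  have hT : ∀ t ≤ T, N * Real.exp (m * t) ≤ s * Real.exp (l * t) := fun t ht => by
    rw [hsplit, ← hTe]
    gcongr
  have hT' : ∀ t ≥ T, s * Real.exp (l * t) ≤ N * Real.exp (m * t) := fun t ht => by
    rw [hsplit, ← hTe]
    gcongr
  have hup : Monotone fun t => s * Real.exp (l * min t 0) := fun t r htr => by
    dsimp only
    gcongr
  have hupd : IsDensity s fun t => s * Real.exp (l * min t 0) :=
    ⟨hup.measurable, fun t => by positivity, fun t => by
      have : Real.exp (l * min t 0) ≤ 1 :=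
        Real.exp_le_one_iff.2 (mul_nonpos_of_nonneg_of_nonpos hl.le (min_le_right _ _))
      nlinarith⟩
  have hle : ∀ t, max 0 (s * Real.exp (l * t) - N * Real.exp (m * t)) ≤
      s * Real.exp (l * min t 0) := fun t => by
    refine max_le (by positivity) ?_
    rcases le_total t 0 with ht | ht
    · rw [min_eq_left ht]
      have := mul_pos hN0 (Real.exp_pos (m * t))
      linarith
    · have h1 := hT' t (hT0.trans ht)
      have : 0 < s * Real.exp (l * min t 0) := by positivity
      linarith
  have hlowd : IsDensity s fun t => max 0 (s * Real.exp (l * t) - N * Real.exp (m * t)) :=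
    ⟨by fun_prop, fun t => le_max_left _ _, fun t => (hle t).trans (hupd.le t)⟩
  have hPN : k * (s / (s + l)) ^ 2 ≤ -(N / (s + m) * P) := by
    have h1 : N / (s + m) = 1 + k * (s / (s + l)) ^ 2 / (-P) := by
      rw [hN]; field_simp
    rw [h1, ← mul_neg, add_mul, div_mul_cancel₀ _ (by linarith : (-P) ≠ 0)]
    linarith
  obtain ⟨ζ, hζ, hζm, hfix, hζl, hζu⟩ := H.exists_step_eq hlowd hupd hle hup
    (H.lower_le_step hl hlm hml hPl hNs hPN hlowd hT0 hT hT') (H.step_upper_le hl hPl hupd)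
  refine ⟨_, _, H.isProfile_of_step_eq hζ hζm hfix, hζ.abs_pastMean_sub_le hs, T, ?_, ?_⟩
  · refine lt_of_lt_of_le ?_ (hlowd.pastMean_mono hζ hs hζl T)
    rw [pastMean_exp_sub_exp hs hl hm (fun t ht => max_eq_right (by linarith [hT t ht])) le_rfl,
      hsplit, hTe, sub_pos]
    exact div_lt_div_of_pos_left (by positivity) (by linarith) (by linarith)
  · refine lt_of_le_of_lt (hζ.pastMean_mono hupd hs hζu T) ?_
    rw [pastMean_exp_sub_exp (B := 0) (m := l) (A := s) hs hl hl
      (fun t ht => by rw [min_eq_left ht]; ring) hT0, zero_mul, zero_div, sub_zero,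
      div_lt_one (by positivity)]
    have : Real.exp (l * T) ≤ 1 :=
      Real.exp_le_one_iff.2 (mul_nonpos_of_nonneg_of_nonpos hl.le hT0)
    nlinarith

end IsDecayRate

end Iteration

section Compactness

open Set Topology MeasureTheory

theorem exists_subseq_tendsto_of_lipschitz {φ : ℕ → ℝ → ℝ} {a : ℕ → ℝ} {S C : ℝ}
    (h0 : ∀ n t, 0 ≤ φ n t) (h1 : ∀ n t, φ n t ≤ 1) (ha : ∀ n, a n ∈ Icc 0 C)
    (hS : ∀ n t r, |φ n t - φ n r| ≤ S * |t - r|) :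
    ∃ u : ℕ → ℕ, StrictMono u ∧ (∃ A, Tendsto (fun n => a (u n)) atTop (𝓝 A)) ∧
      ∃ ψ : ℝ → ℝ, ∀ t, Tendsto (fun n => φ (u n) t) atTop (𝓝 (ψ t)) := by
  have hK : IsCompact ((univ.pi fun _ : ℚ => Icc (0 : ℝ) 1) ×ˢ Icc 0 C) :=
    (isCompact_univ_pi fun _ => isCompact_Icc).prod isCompact_Icc
  obtain ⟨⟨x, A⟩, -, u, hu, hlim⟩ := hK.tendsto_subseq
    (x := fun n => (fun q : ℚ => φ n q, a n)) fun n => ⟨fun q _ => ⟨h0 n q, h1 n q⟩, ha n⟩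
  rw [Prod.tendsto_iff] at hlim
  refine ⟨u, hu, ⟨A, hlim.2⟩, ?_⟩
  have hq : ∀ q : ℚ, Tendsto (fun n => φ (u n) q) atTop (𝓝 (x q)) := fun q =>
    (tendsto_pi_nhds.1 hlim.1) q
  have hS0 : 0 ≤ S := by simpa using (abs_nonneg _).trans (hS 0 1 0)
  have hex : ∀ t, ∃ l, Tendsto (fun n => φ (u n) t) atTop (𝓝 l) := by
    intro t
    refine cauchySeq_tendsto_of_complete (Metric.cauchySeq_iff.2 fun ε hε => ?_)
    have hδ : 0 < ε / (3 * (S + 1)) := by positivity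
    obtain ⟨q, hq1, hq2⟩ := exists_rat_btwn (show t < t + ε / (3 * (S + 1)) by linarith)
    obtain ⟨n₀, hn₀⟩ := Metric.cauchySeq_iff.1 (hq q).cauchySeq (ε / 3) (by positivity)
    refine ⟨n₀, fun i hi j hj => ?_⟩
    have h3 : S * |t - q| < ε / 3 := by
      have h4 : |t - q| ≤ ε / (3 * (S + 1)) := by
        rw [abs_le]; constructor <;> linarith
      have h5 : (S + 1) * (ε / (3 * (S + 1))) = ε / 3 := by field_simp
      have h6 := mul_le_mul_of_nonneg_left h4 hS0
      linarith
    have h4 := (hS (u i) t q).trans_lt h3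
    have h5 := (hS (u j) t q).trans_lt h3
    have h6 := hn₀ i hi j hj
    rw [Real.dist_eq] at h6 ⊢
    rw [abs_lt] at *
    constructor <;> linarith [h4.1, h4.2, h5.1, h5.2, h6.1, h6.2]
  choose ψ hψ using hex
  exact ⟨ψ, hψ⟩

theorem continuous_of_abs_sub_le {f : ℝ → ℝ} {S : ℝ} (hS : ∀ t r, |f t - f r| ≤ S * |t - r|) :
    Continuous f := by
  have hS0 : 0 ≤ S := by simpa using (abs_nonneg _).trans (hS 1 0)
  exact (LipschitzWith.of_dist_le_mul (K := ⟨S, hS0⟩) hS).continuous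

theorem tendsto_intervalIntegral {F : ℕ → ℝ → ℝ} {f : ℝ → ℝ} {C : ℝ} (hF : ∀ n, Continuous (F n))
    (hC : ∀ n t, |F n t| ≤ C) (hlim : ∀ t, Tendsto (fun n => F n t) atTop (𝓝 (f t))) (r t : ℝ) :
    Tendsto (fun n => ∫ x in r..t, F n x) atTop (𝓝 (∫ x in r..t, f x)) :=
  intervalIntegral.tendsto_integral_filter_of_dominated_convergence (fun _ => C)
    (Eventually.of_forall fun n => (hF n).aestronglyMeasurable)
    (Eventually.of_forall fun n => Eventually.of_forall fun t _ => hC n t)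
    intervalIntegrable_const (Eventually.of_forall fun t _ => hlim t)

theorem hasDerivAt_const_add_integral {f F : ℝ → ℝ} {A : ℝ} (hf : Continuous f)
    (hF : ∀ t, F t = A + ∫ x in (0 : ℝ)..t, f x) (t : ℝ) : HasDerivAt F (f t) t := by
  obtain rfl : F = fun t => A + ∫ x in (0 : ℝ)..t, f x := funext hF
  exact (intervalIntegral.integral_hasDerivAt_right (hf.intervalIntegrable _ _)
    hf.stronglyMeasurable.stronglyMeasurableAtFilter hf.continuousAt).const_add A

theorem eq_add_integral {F f : ℝ → ℝ} (hF : ∀ t, HasDerivAt F (f t) t) (hf : Continuous f)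
    (t : ℝ) : F t = F 0 + ∫ x in (0 : ℝ)..t, f x := by
  rw [intervalIntegral.integral_eq_sub_of_hasDerivAt (fun x _ => hF x)
    (hf.intervalIntegrable _ _)]
  ring

theorem IsProfile.continuous_p {b c h k : ℝ} {φ p : ℝ → ℝ} (hφ : IsProfile b c h k φ p) :
    Continuous p :=
  continuous_iff_continuousAt.2 fun t => (hφ.hasDerivAt_p t).continuousAt

/-- Limits of equi-Lipschitz profiles are profiles. -/
theorem exists_limit_profile {b c h K S : ℝ} {k : ℕ → ℝ} {φ p : ℕ → ℝ → ℝ}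
    (hc : 0 < c) (hk : ∀ n, 0 < k n) (hkK : Tendsto k atTop (𝓝 K))
    (hφ : ∀ n, IsProfile b c h (k n) (φ n) (p n))
    (hpc : ∀ n t, p n t ≤ c)
    (hS : ∀ n t r, |φ n t - φ n r| ≤ S * |t - r|) :
    ∃ ψ q, IsProfile b c h K ψ q ∧ Continuous ψ ∧
      ∃ u : ℕ → ℕ, ∀ t, Tendsto (fun n => φ (u n) t) atTop (𝓝 (ψ t)) := by
  obtain ⟨u, hu, ⟨A, hA⟩, ψ, hψ⟩ := exists_subseq_tendsto_of_lipschitz (a := fun n => p n 0)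
    (fun n => (hφ n).nonneg) (fun n => (hφ n).le_one)
    (fun n => ⟨(hφ n).p_nonneg (hk n) hc 0, hpc n 0⟩) hS
  have hψc : Continuous ψ := continuous_of_abs_sub_le (S := S) fun t r =>
    le_of_tendsto ((hψ t).sub (hψ r)).abs (Eventually.of_forall fun n => hS (u n) t r)
  have hcont : ∀ n, Continuous (φ n) := fun n => continuous_of_abs_sub_le (hS n)
  set v : ℝ → ℝ := fun t => ψ t - b * ψ (t - h) with hv
  set g : ℝ → ℝ := fun t => ψ t * (1 - ψ (t - h)) with hg
  have hvlim : ∀ t, Tendsto (fun n => φ (u n) t - b * φ (u n) (t - h)) atTop (𝓝 (v t)) :=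
    fun t => (hψ t).sub ((hψ _).const_mul b)
  have hglim : ∀ t, Tendsto (fun n => φ (u n) t * (1 - φ (u n) (t - h))) atTop (𝓝 (g t)) :=
    fun t => (hψ t).mul ((hψ _).const_sub 1)
  have hgint : ∀ t, Tendsto (fun n => ∫ x in (0 : ℝ)..t, φ (u n) x * (1 - φ (u n) (x - h)))
      atTop (𝓝 (∫ x in (0 : ℝ)..t, g x)) := by
    refine tendsto_intervalIntegral (C := 1) (fun n => ?_) (fun n t => ?_) hglim 0
    · have := hcont (u n)
      fun_prop
    · rw [abs_of_nonneg ((hφ _).reaction_nonneg t)]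
      nlinarith [(hφ (u n)).nonneg t, (hφ (u n)).le_one t, (hφ (u n)).nonneg (t - h),
        (hφ (u n)).le_one (t - h)]
  set q : ℝ → ℝ := fun t => A + c * (v t - v 0) - K * ∫ x in (0 : ℝ)..t, g x with hq
  have hplim : ∀ t, Tendsto (fun n => p (u n) t) atTop (𝓝 (q t)) := by
    intro t
    refine ((hA.add (((hvlim t).sub (hvlim 0)).const_mul c)).sub
      ((hkK.comp hu.tendsto_atTop).mul (hgint t))).congr fun n => ?_
    have h1 := eq_add_integral (hφ (u n)).hasDerivAt_sub (by have := hcont (u n); fun_prop) t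
    rw [intervalIntegral.integral_neg, intervalIntegral.integral_const_mul] at h1
    simp only [Function.comp_apply]
    linarith
  have hgc : Continuous g := by fun_prop
  have hvc : Continuous v := by fun_prop
  have hGd := hasDerivAt_const_add_integral hgc (F := fun t => ∫ x in (0 : ℝ)..t, g x)
    (A := 0) (fun t => (zero_add _).symm)
  have hqc : Continuous q :=
    (continuous_const.add ((hvc.sub continuous_const).const_mul c)).sub
      ((continuous_iff_continuousAt.2 fun t => (hGd t).continuousAt).const_mul K)
  have hvq : ∀ t, HasDerivAt v (q t) t := by
    refine hasDerivAt_const_add_integral hqc (A := v 0) fun t => ?_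
    refine tendsto_nhds_unique (hvlim t) (((hvlim 0).add
      (tendsto_intervalIntegral (C := c) (fun n => (hφ (u n)).continuous_p)
        (fun n t => ?_) hplim 0 t)).congr fun n => ?_)
    · rw [abs_of_nonneg ((hφ _).p_nonneg (hk _) hc t)]
      exact hpc _ t
    · exact (eq_add_integral (hφ (u n)).hasDerivAt_v (hφ (u n)).continuous_p t).symm
  refine ⟨ψ, q, ⟨fun t r htr => ?_, fun t => ?_, fun t => ?_, hvq, fun t => ?_⟩, hψc, u, hψ⟩
  · exact le_of_tendsto_of_tendsto' (hψ t) (hψ r) fun n => (hφ _).mono htr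
  · exact ge_of_tendsto' (hψ t) fun n => (hφ _).nonneg t
  · exact le_of_tendsto' (hψ t) fun n => (hφ _).le_one t
  · exact ((((hvq t).sub_const (v 0)).const_mul c).const_add A).sub ((hGd t).const_mul K)

theorem IsProfile.comp_add {b c h k : ℝ} {φ p : ℝ → ℝ} (hφ : IsProfile b c h k φ p) (r : ℝ) :
    IsProfile b c h k (fun t => φ (t + r)) fun t => p (t + r) := by
  refine ⟨fun t s hts => hφ.mono (by linarith), fun t => hφ.nonneg _, fun t => hφ.le_one _,
    fun t => ?_, fun t => ?_⟩
  · simpa only [sub_add_eq_add_sub] using (hφ.hasDerivAt_v (t + r)).comp_add_const t r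
  · simpa only [sub_add_eq_add_sub] using (hφ.hasDerivAt_p (t + r)).comp_add_const t r

/-- A continuous profile can be translated to take the value `1/2` at the origin. -/
theorem IsProfile.exists_eq_half {b c h k : ℝ} {φ p : ℝ → ℝ} (hφ : IsProfile b c h k φ p)
    (hk : 0 < k) (hcont : Continuous φ) {t : ℝ} (h0 : 0 < φ t) (h1 : φ t < 1) :
    ∃ r, φ r = 1 / 2 := by
  obtain ⟨hbot, htop⟩ := hφ.limits hk h0 h1
  exact mem_range_of_exists_le_of_exists_ge hcont
    ((hbot.eventually_le_const one_half_pos).exists)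
    ((htop.eventually_const_le one_half_lt_one).exists)

end Compactness

section Sufficiency

open Set Topology

theorem exists_profile_of_inD {b c τ k z : ℝ} (hb0 : 0 ≤ b) (hb1 : b < 1) (hτ : 0 < τ) (hc : 0 < c)
    (hk0 : 0 < k) (hk1 : k < 1) (h₀ : ∃ z > (0 : ℝ), chi0 b c τ z = 0) (hz : z < 0)
    (h₁ : chi1 b c τ z = 0) :
    ∃ φ p, IsProfile b c (c * τ) k φ p ∧ (∀ t r, |φ t - φ r| ≤ -z * |t - r|) ∧ φ 0 = 1 / 2 := by
  obtain ⟨z₀, hz₀, hchi⟩ := h₀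
  obtain ⟨l, m, hl, hlm, hml, hPl, hPm⟩ := exists_growth_exponents hb0 hb1 hc hτ hk0 hk1 hz₀ hchi
  obtain ⟨s, hs, hsz, hchar⟩ := exists_decay_exponent hc hk0 hk1 hz h₁
  have H : IsDecayRate b c (c * τ) k s := ⟨hb0, hb1, hc, mul_pos hc hτ, hk0, hs, hchar⟩
  obtain ⟨φ, p, hφ, hlip, t, ht0, ht1⟩ := H.exists_profile hl hlm hml hPl hPm
  obtain ⟨r, hr⟩ := hφ.exists_eq_half hk0 (continuous_of_abs_sub_le hlip) ht0 ht1
  refine ⟨_, _, hφ.comp_add r, fun x y => (hlip _ _).trans ?_, by simpa using hr⟩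
  rw [add_sub_add_right_eq_sub]
  exact mul_le_mul_of_nonneg_right hsz (abs_nonneg _)

theorem exists_front_of_inD {b c τ : ℝ} (hb0 : 0 ≤ b) (hb1 : b < 1) (hτ : 0 < τ) (hc : 0 < c)
    (hD : inD b τ c) : ∃ φ, IsMonotoneFront b c τ φ := by
  obtain ⟨h₀, z, hz, h₁⟩ := hD
  have hk0 : ∀ n : ℕ, 0 < 1 - 1 / ((n : ℝ) + 2) := fun n => by
    rw [sub_pos, div_lt_one (by positivity)]
    linarith [n.cast_nonneg (α := ℝ)]
  have hk1 : ∀ n : ℕ, 1 - 1 / ((n : ℝ) + 2) < 1 := fun n => by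
    have : 0 < 1 / ((n : ℝ) + 2) := by positivity
    linarith
  choose φ p hφ hlip hhalf using fun n => 
    exists_profile_of_inD hb0 hb1 hτ hc (hk0 n) (hk1 n) h₀ hz h₁
  have hk : Tendsto (fun n : ℕ => 1 - 1 / ((n : ℝ) + 2)) atTop (𝓝 1) := by
    have h2 : Tendsto (fun n : ℕ => (n : ℝ) + 2) atTop atTop :=
      tendsto_atTop_add_const_right _ 2 tendsto_natCast_atTop_atTop
    simpa using (h2.inv_tendsto_atTop).const_sub 1
  obtain ⟨ψ, q, hψ, hcont, u, hu⟩ := exists_limit_profile hc hk0 hk hφ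
    (fun n => (hφ n).p_le_const hb0 hb1 (hk0 n) hc) hlip
  have hψ0 : ψ 0 = 1 / 2 := tendsto_nhds_unique (hu 0) (by simp [hhalf])
  obtain ⟨hbot, htop⟩ := hψ.limits one_pos (s := 0) (by rw [hψ0]; norm_num) (by rw [hψ0]; norm_num)
  exact ⟨ψ, hψ.isMonotoneFront hcont hbot htop⟩

end Sufficiency

/-- For `b ∈ [0,1)` and `τ > 0`, the neutral KPP-Fisher equation admits a
monotone traveling front with speed `c > 0` if and only if `(τ, c) ∈ 𝔇`. -/
theorem neutral_KPP_front_exists_iff (b τ c : ℝ) (hb0 : 0 ≤ b) (hb1 : b < 1)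
    (hτ : 0 < τ) (hc : 0 < c) :
    (∃ φ : ℝ → ℝ, IsMonotoneFront b c τ φ) ↔ inD b τ c := by
  exact ⟨fun ⟨_, hφ⟩ => hφ.inD hb0 hb1 hτ hc, exists_front_of_inD hb0 hb1 hτ hc⟩
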